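/- If G is a 5-connected nonplanar apex graph with apex vertex v, and G does not contain K₄⁻ as a subgraph, then the planar graph G − v has minimum degree exactly 4. -/

import Mathlib

open SimpleGraph

variable {V : Type*}

/-- `K₄⁻` (two triangles sharing the edge `ab`; the edge `cd` may be absent)
occurs as a subgraph of `G`. -/
def containsK4minus (G : SimpleGraph V) : Prop :=
  ∃ a b c d : V, a ≠ b ∧ a ≠ c ∧ a ≠ d ∧ b ≠ c ∧ b ≠ d ∧ c ≠ d ∧
    G.Adj a b ∧ G.Adj a c ∧ G.Adj a d ∧ G.Adj b c ∧ G.Adj b d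

/-- `G` contains a subdivision of `K₅`: five branch vertices joined by
pairwise internally disjoint paths. -/
def containsK5Subdivision (G : SimpleGraph V) : Prop :=
  ∃ (b : Fin 5 → V) (P : ∀ i j : Fin 5, G.Walk (b i) (b j)),
    Function.Injective b ∧
    (∀ i j, i ≠ j → (P i j).IsPath) ∧
    (∀ i j, i ≠ j → ∀ k, b k ∈ (P i j).support → k = i ∨ k = j) ∧
    (∀ i j i' j', i < j → i' < j' → (i, j) ≠ (i', j') →
      ∀ x, x ∈ (P i j).support → x ∈ (P i' j').support → x = b i ∨ x = b j)

/-- `G` has an `H`-minor (branch sets are connected, disjoint, joined by edges). -/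
def HasMinor {W : Type*} (G : SimpleGraph V) (H : SimpleGraph W) : Prop :=
  ∃ f : W → Set V,
    (∀ w, (G.induce (f w)).Connected) ∧
    (∀ w₁ w₂, w₁ ≠ w₂ → Disjoint (f w₁) (f w₂)) ∧
    (∀ w₁ w₂, H.Adj w₁ w₂ → ∃ x ∈ f w₁, ∃ y ∈ f w₂, G.Adj x y)

/-- Planarity, via Wagner's theorem: no `K₅` and no `K₃,₃` minor. -/
def IsPlanar (G : SimpleGraph V) : Prop :=
  ¬ HasMinor G (completeGraph (Fin 5)) ∧
  ¬ HasMinor G (completeBipartiteGraph (Fin 3) (Fin 3))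

/-- `G` is `k`-connected: more than `k` vertices, and removing fewer than `k`
vertices leaves a connected graph. -/
def IsKConnected (k : ℕ) (G : SimpleGraph V) : Prop :=
  k < (Set.univ : Set V).ncard ∧
  ∀ S : Set V, S.Finite → S.ncard < k → (G.induce Sᶜ).Connected

/-- Boundary of a subgraph `H` of `G`: vertices of `H` incident with an edge
of `G` not in `H`. -/
def bnd (G : SimpleGraph V) (H : G.Subgraph) : Set V :=
  {v | v ∈ H.verts ∧ ∃ w, G.Adj v w ∧ ¬ H.Adj v w}

/-- A `k`-hammock: connected subgraph with boundary of size `k`. -/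
def IsHammock (G : SimpleGraph V) (k : ℕ) (H : G.Subgraph) : Prop :=
  H.Connected ∧ (bnd G H).ncard = k

def TrivialHammock (G : SimpleGraph V) (H : G.Subgraph) : Prop :=
  H.verts = bnd G H

def DegenerateHammock (G : SimpleGraph V) (H : G.Subgraph) : Prop :=
  H.verts.ncard = (bnd G H).ncard + 1

def FatHammock (G : SimpleGraph V) (H : G.Subgraph) : Prop :=
  (bnd G H).ncard + 2 ≤ H.verts.ncard

/-- A `4`-hammock is minimal if all its proper `4`-hammocks are trivial or degenerate. -/
def Minimal4Hammock (G : SimpleGraph V) (H : G.Subgraph) : Prop :=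
  IsHammock G 4 H ∧
  ∀ H' : G.Subgraph, H' ≤ H → H' ≠ H → IsHammock G 4 H' →
    TrivialHammock G H' ∨ DegenerateHammock G H'

def MinimalFat4Hammock (G : SimpleGraph V) (H : G.Subgraph) : Prop :=
  Minimal4Hammock G H ∧ FatHammock G H

/-- The list `l` records a cycle of `G` (vertices in clockwise order). -/
def IsCycleList (G : SimpleGraph V) (l : List V) : Prop :=
  l.Nodup ∧ 3 ≤ l.length ∧
    ∀ i : Fin l.length,
      G.Adj (l.get i) (l.get ⟨((i : ℕ) + 1) % l.length, Nat.mod_lt _ i.pos⟩)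

/-- `x` and `y` are consecutive on the cyclic list `C`. -/
def CycAdj (C : List V) (x y : V) : Prop :=
  ∃ i : Fin C.length,
    (C.get i = x ∧ C.get ⟨((i : ℕ) + 1) % C.length, Nat.mod_lt _ i.pos⟩ = y) ∨
    (C.get i = y ∧ C.get ⟨((i : ℕ) + 1) % C.length, Nat.mod_lt _ i.pos⟩ = x)

/-- Clockwise (forward) distance between positions on a cycle of length `n`. -/
def cycDist (n i j : ℕ) : ℕ := (j + n - i) % n

/-- The open segment of the cycle `C` from `a` clockwise to `b`. -/
def segOpen (C : List V) (a b : V) : Set V :=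
  {x | ∃ i j k : Fin C.length, C.get i = a ∧ C.get j = b ∧ C.get k = x ∧
    k ≠ i ∧ k ≠ j ∧ cycDist C.length (i : ℕ) (k : ℕ) < cycDist C.length (i : ℕ) (j : ℕ)}

/-- The closed segment of the cycle `C` from `a` clockwise to `b`. -/
def segClosed (C : List V) (a b : V) : Set V := segOpen C a b ∪ {a, b}

/-- `a 0, a 1, a 2, a 3` appear in this clockwise order along the cycle `C`. -/
def ClockwiseOn (C : List V) (a : Fin 4 → V) : Prop :=
  ∃ p : Fin 4 → Fin C.length, (∀ j, C.get (p j) = a j) ∧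
    ∀ j k : Fin 4, j < k →
      cycDist C.length ((p 0 : Fin C.length) : ℕ) ((p j : Fin C.length) : ℕ) <
        cycDist C.length ((p 0 : Fin C.length) : ℕ) ((p k : Fin C.length) : ℕ)

/-- `x` and `y` are consecutive among the points of `S` on the cycle `C`:
one of the two open arcs between them misses `S`. -/
def ConsecutiveOn (C : List V) (S : Set V) (x y : V) : Prop :=
  segOpen C x y ∩ S = ∅ ∨ segOpen C y x ∩ S = ∅

/-- A combinatorial plane graph: a graph together with its facial cycles and a
distinguished outer face; every edge lies on exactly two faces and every vertex
on exactly `deg` faces (valid for `2`-connected plane graphs). -/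
structure PlaneGraph (V : Type*) where
  graph : SimpleGraph V
  faces : Finset (List V)
  outer : List V
  outer_mem : outer ∈ faces
  faces_cycle : ∀ f ∈ faces, IsCycleList graph f
  edge_two_faces : ∀ x y, graph.Adj x y →
    {f ∈ (faces : Set (List V)) | CycAdj f x y}.ncard = 2
  vertex_faces : ∀ v : V,
    {f ∈ (faces : Set (List V)) | v ∈ f}.ncard = (graph.neighborSet v).ncard

def Cofacial (P : PlaneGraph V) (u w : V) : Prop :=
  ∃ f ∈ P.faces, u ∈ f ∧ w ∈ f

/-- `C` is the rim of the facial wheel `S_u`: the induced cycle on the vertices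
cofacial with `u`, containing `N(u)` and separating `u` from the rest of the graph. -/
def IsFacialRim (P : PlaneGraph V) (u : V) (C : List V) : Prop :=
  IsCycleList P.graph C ∧ u ∉ C ∧
  (∀ w, w ∈ C ↔ (w ≠ u ∧ Cofacial P u w)) ∧
  P.graph.neighborSet u ⊆ {x | x ∈ C} ∧
  (∀ x ∈ C, ∀ y ∈ C, P.graph.Adj x y → CycAdj C x y) ∧
  (∀ w, w ∉ C → w ≠ u → ∀ p : P.graph.Walk u w, ∃ x ∈ p.support, x ∈ C)

/-- The facial wheel `S_u` (hub `u`, spokes, and rim `C`) is a subgraph of `H`. -/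
def WheelIn (G : SimpleGraph V) (H : G.Subgraph) (u : V) (C : List V) : Prop :=
  u ∈ H.verts ∧ (∀ x ∈ C, x ∈ H.verts) ∧
  (∀ x, G.Adj u x → H.Adj u x) ∧
  (∀ x y, CycAdj C x y → H.Adj x y)

/-- A system of `k` pairwise vertex-disjoint `(A,B)`-paths inside the subgraph `H`,
internally disjoint from `A ∪ B`. -/
structure Linkage (G : SimpleGraph V) (H : G.Subgraph) (A B : Set V) (k : ℕ) where
  s : Fin k → V
  t : Fin k → V
  walk : ∀ i, G.Walk (s i) (t i)
  isPath : ∀ i, (walk i).IsPath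
  support_mem : ∀ i, ∀ x ∈ (walk i).support, x ∈ H.verts
  edges_mem : ∀ i, ∀ e ∈ (walk i).edges, e ∈ H.edgeSet
  s_mem : ∀ i, s i ∈ A
  t_mem : ∀ i, t i ∈ B
  internal : ∀ i, ∀ x ∈ (walk i).support, x ≠ s i → x ≠ t i → x ∉ A ∧ x ∉ B
  disj : ∀ i j, i ≠ j → ∀ x ∈ (walk i).support, x ∉ (walk j).support

/-- A `C_u`-linkage: a `(bnd H, C)`-4-linkage in `H`. -/
abbrev CuLinkage (G : SimpleGraph V) (H : G.Subgraph) (C : List V) :=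
  Linkage G H (bnd G H) {x | x ∈ C} 4

/-- `α(L)`: the number of endpoints of the linkage lying in `N(u)`. -/
noncomputable def lAlpha (G : SimpleGraph V) (u : V) {H : G.Subgraph} {A B : Set V} {k : ℕ}
    (L : Linkage G H A B k) : ℕ :=
  {i : Fin k | L.t i ∈ G.neighborSet u}.ncard

/-- Data of a short wheel: the four neighbours of `u` in clockwise rim order,
two edge-disjoint triangles at `u`, and the two remaining rim segments of
order between 2 and 4, not both of order 4. -/
def ShortWheelOn (G : SimpleGraph V) (u : V) (C : List V) (n : Fin 4 → V) : Prop :=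
  ClockwiseOn C n ∧ Set.range n = G.neighborSet u ∧
  G.Adj (n 0) (n 1) ∧ G.Adj (n 2) (n 3) ∧
  (segOpen C (n 1) (n 2)).ncard ≤ 2 ∧ (segOpen C (n 3) (n 0)).ncard ≤ 2 ∧
  ¬((segOpen C (n 1) (n 2)).ncard = 2 ∧ (segOpen C (n 3) (n 0)).ncard = 2)

def IsShortWheel (G : SimpleGraph V) (u : V) (C : List V) : Prop :=
  (G.neighborSet u).ncard = 4 ∧ ∃ n, ShortWheelOn G u C n

/-- A short wheel which, if imbalanced (a segment of order 4), is proper with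
respect to the boundary set `B`: the interior of that segment avoids `B`. -/
def IsShortProperWheel (G : SimpleGraph V) (u : V) (C : List V) (B : Set V) : Prop :=
  (G.neighborSet u).ncard = 4 ∧ ∃ n, ShortWheelOn G u C n ∧
    ((segOpen C (n 1) (n 2)).ncard = 2 → segOpen C (n 1) (n 2) ∩ B = ∅) ∧
    ((segOpen C (n 3) (n 0)).ncard = 2 → segOpen C (n 3) (n 0) ∩ B = ∅)



namespace Apex

/-- Cut formulation of connectedness of a vertex set. -/
def Conn {W : Type*} (G : SimpleGraph W) (S : Set W) : Prop :=
  S.Nonempty ∧ ∀ T ⊆ S, T.Nonempty → T ≠ S → ∃ a ∈ T, ∃ b ∈ S, b ∉ T ∧ G.Adj a b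

theorem conn_of_induce {W : Type*} {G : SimpleGraph W} {S : Set W}
    (h : (G.induce S).Connected) : Conn G S := by
  obtain ⟨⟨x, hx⟩⟩ := h.nonempty
  refine ⟨⟨x, hx⟩, ?_⟩
  intro T hTS ⟨t, ht⟩ hne
  by_contra hcon
  push Not at hcon
  apply hne
  apply Set.Subset.antisymm hTS
  intro s hs
  have key : ∀ (a b : S), (G.induce S).Walk a b → a.1 ∈ T → b.1 ∈ T := by
    intro a b w
    induction w with
    | nil => exact id
    | cons hadj _ ih =>
      intro ha
      apply ih
      by_contra hb
      exact hcon _ ha _ (Subtype.property _) hb hadj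
  obtain ⟨w⟩ := h.preconnected ⟨t, hTS ht⟩ ⟨s, hs⟩
  exact key _ _ w ht

theorem induce_of_conn {W : Type*} {G : SimpleGraph W} {S : Set W}
    (h : Conn G S) : (G.induce S).Connected := by
  obtain ⟨⟨z, hz⟩, hcut⟩ := h
  have : Nonempty S := ⟨⟨z, hz⟩⟩
  refine ⟨?_⟩
  rintro ⟨x, hx⟩ ⟨y, hy⟩
  by_contra hcon
  obtain ⟨a, ⟨ha, har⟩, b, hb, hbT, hab⟩ := hcut
    {w | ∃ hw : w ∈ S, (G.induce S).Reachable ⟨x, hx⟩ ⟨w, hw⟩}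
    (fun w hw => hw.1) ⟨x, hx, Reachable.refl _⟩
    (fun he => by
      have : y ∈ {w | ∃ hw : w ∈ S, (G.induce S).Reachable ⟨x, hx⟩ ⟨w, hw⟩} := by
        rw [he]; exact hy
      exact hcon this.2)
  apply hbT
  refine ⟨hb, har.trans ?_⟩
  apply Adj.reachable
  exact hab

theorem conn_singleton {W : Type*} {G : SimpleGraph W} (x : W) : Conn G {x} := by
  refine ⟨⟨x, rfl⟩, ?_⟩
  intro T hT hne hT2
  exact absurd ((Set.Nonempty.subset_singleton_iff hne).1 hT) hT2

theorem conn_union {W : Type*} {G : SimpleGraph W} {A B : Set W} (hA : Conn G A) (hB : Conn G B)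
    (h : ∃ a ∈ A, ∃ b ∈ B, a = b ∨ G.Adj a b) : Conn G (A ∪ B) := by
  refine ⟨hA.1.mono Set.subset_union_left, ?_⟩
  intro T hT hne hTne
  obtain ⟨a, ha, b, hb, hab⟩ := h
  by_cases h1 : (T ∩ A).Nonempty ∧ T ∩ A ≠ A
  · obtain ⟨x, hx, y, hy, hyT, hxy⟩ := hA.2 _ Set.inter_subset_right h1.1 h1.2
    exact ⟨x, hx.1, y, Or.inl hy, fun h => hyT ⟨h, hy⟩, hxy⟩
  by_cases h2 : (T ∩ B).Nonempty ∧ T ∩ B ≠ B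
  · obtain ⟨x, hx, y, hy, hyT, hxy⟩ := hB.2 _ Set.inter_subset_right h2.1 h2.2
    exact ⟨x, hx.1, y, Or.inr hy, fun h => hyT ⟨h, hy⟩, hxy⟩
  have h1' : (∀ x ∈ T, x ∉ A) ∨ A ⊆ T := by
    by_cases hh : (T ∩ A).Nonempty
    · right
      have : T ∩ A = A := by by_contra h'; exact h1 ⟨hh, h'⟩
      exact Set.inter_eq_right.1 this
    · left; intro x hx hxA; exact hh ⟨x, hx, hxA⟩
  have h2' : (∀ x ∈ T, x ∉ B) ∨ B ⊆ T := by
    by_cases hh : (T ∩ B).Nonempty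
    · right
      have : T ∩ B = B := by by_contra h'; exact h2 ⟨hh, h'⟩
      exact Set.inter_eq_right.1 this
    · left; intro x hx hxA; exact hh ⟨x, hx, hxA⟩
  rcases h1' with h1' | h1' <;> rcases h2' with h2' | h2'
  · obtain ⟨t, ht⟩ := hne
    rcases hT ht with h | h
    · exact absurd h (h1' t ht)
    · exact absurd h (h2' t ht)
  · rcases hab with hab | hab
    · subst hab; exact absurd ha (h1' _ (h2' hb))
    · exact ⟨b, h2' hb, a, Or.inl ha, fun h => h1' _ h ha, hab.symm⟩
  · rcases hab with hab | hab
    · subst hab; exact absurd hb (h2' _ (h1' ha))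
    · exact ⟨a, h1' ha, b, Or.inr hb, fun h => h2' _ h hb, hab⟩
  · exact absurd (Set.Subset.antisymm hT (Set.union_subset h1' h2')) hTne

theorem conn_insert {W : Type*} {G : SimpleGraph W} {A : Set W} (hA : Conn G A) {a y : W}
    (ha : a ∈ A) (h : G.Adj a y) : Conn G (insert y A) := by
  rw [Set.insert_eq]
  exact conn_union (conn_singleton y) hA ⟨y, rfl, a, ha, Or.inr h.symm⟩

theorem exists_comp {W : Type*} [Finite W] {G : SimpleGraph W} {R D0 : Set W} (h0 : Conn G D0)
    (hR : D0 ⊆ R) : ∃ D, D0 ⊆ D ∧ D ⊆ R ∧ Conn G D ∧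
      ∀ a ∈ D, ∀ b ∈ R, b ∉ D → ¬ G.Adj a b := by
  obtain ⟨D, hD0, hD⟩ := (Set.toFinite {D : Set W | D ⊆ R ∧ Conn G D}).exists_le_maximal
    (a := D0) ⟨hR, h0⟩
  refine ⟨D, hD0, hD.prop.1, hD.prop.2, ?_⟩
  intro a ha b hb hbD hab
  apply hbD
  have := hD.le_of_ge (y := insert b D)
    ⟨Set.insert_subset hb hD.prop.1, conn_insert hD.prop.2 ha hab⟩ (Set.subset_insert _ _)
  exact this (Set.mem_insert _ _)

/-- In a connected set covered by `A`, `B` and `R`, either `A` and `B` are adjacent or a component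
of `R` touches both. -/
theorem link {W : Type*} [Finite W] {G : SimpleGraph W} {X A B R : Set W} (hX : Conn G X)
    (hcov : X = A ∪ B ∪ R) (hA : A.Nonempty) (hB : B.Nonempty)
    (hAB : Disjoint A B) (hBR : Disjoint B R) :
    (∃ a ∈ A, ∃ b ∈ B, G.Adj a b) ∨
    ∃ D ⊆ R, Conn G D ∧ (∀ a ∈ D, ∀ b ∈ R, b ∉ D → ¬ G.Adj a b) ∧
      (∃ a ∈ A, ∃ d ∈ D, G.Adj d a) ∧ (∃ b ∈ B, ∃ d ∈ D, G.Adj d b) := by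
  by_contra hcon
  push Not at hcon
  obtain ⟨h1, h2⟩ := hcon
  obtain ⟨b0, hb0⟩ := hB
  have hb0A : b0 ∉ A := fun h => Set.disjoint_left.1 hAB h hb0
  have hb0R : b0 ∉ R := fun h => Set.disjoint_left.1 hBR hb0 h
  obtain ⟨x, hx, y, hy, hyT, hxy⟩ := hX.2
    (A ∪ {w | ∃ D ⊆ R, w ∈ D ∧ Conn G D ∧ (∀ a ∈ D, ∀ b ∈ R, b ∉ D → ¬ G.Adj a b) ∧
      (∃ a ∈ A, ∃ d ∈ D, G.Adj d a)})
    (by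
      rw [hcov]
      rintro w (hw | ⟨D, hDR, hwD, _⟩)
      · exact Or.inl (Or.inl hw)
      · exact Or.inr (hDR hwD))
    (hA.mono Set.subset_union_left)
    (by
      intro he
      have : b0 ∈ X := by rw [hcov]; exact Or.inl (Or.inr hb0)
      rw [← he] at this
      rcases this with h | ⟨D, hDR, hwD, _⟩
      · exact hb0A h
      · exact hb0R (hDR hwD))
  rw [hcov] at hy
  have hyA : y ∉ A := fun h => hyT (Or.inl h)
  rcases hx with hx | ⟨D, hDR, hxD, hDc, hDm, hDA⟩
  · rcases hy with (hy | hy) | hy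
    · exact hyA hy
    · exact h1 x hx y hy hxy
    · obtain ⟨D, hyD, hDR, hDc, hDm⟩ := exists_comp (G := G) (conn_singleton y)
        (Set.singleton_subset_iff.2 hy)
      exact hyT (Or.inr ⟨D, hDR, hyD rfl, hDc, hDm, x, hx, y, hyD rfl, hxy.symm⟩)
  · rcases hy with (hy | hy) | hy
    · exact hyA hy
    · obtain ⟨a, ha, d, hd, had⟩ := hDA
      exact h2 D hDR hDc hDm ⟨a, ha, d, hd, had⟩ y hy x hxD hxy
    · by_cases hyD : y ∈ D
      · exact hyT (Or.inr ⟨D, hDR, hyD, hDc, hDm, hDA⟩)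
      · exact hDm x hxD y hy hyD hxy

theorem seg_conn {W : Type*} {G : SimpleGraph W} (c : ℕ → W) (i : ℕ) (m : ℕ) (him : i ≤ m)
    (h : ∀ l, i ≤ l → l < m → G.Adj (c l) (c (l + 1))) :
    Conn G {w | ∃ l, i ≤ l ∧ l ≤ m ∧ c l = w} := by
  induction m, him using Nat.le_induction with
  | base =>
    convert conn_singleton (G := G) (c i) using 1
    ext w
    constructor
    · rintro ⟨l, h1, h2, rfl⟩
      have : l = i := by omega
      subst this; rfl
    · rintro rfl
      exact ⟨i, le_rfl, le_rfl, rfl⟩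
  | succ m hm ih =>
    have := conn_insert (ih (fun l h1 h2 => h l h1 (by omega))) (a := c m) (y := c (m + 1))
      ⟨m, hm, le_rfl, rfl⟩ (h m hm (by omega))
    convert this using 1
    ext w
    constructor
    · rintro ⟨l, h1, h2, rfl⟩
      rcases Nat.lt_or_ge m l with h3 | h3
      · have : l = m + 1 := by omega
        subst this; left; rfl
      · right; exact ⟨l, h1, h3, rfl⟩
    · rintro (rfl | ⟨l, h1, h2, rfl⟩)
      · exact ⟨m + 1, by omega, le_rfl, rfl⟩
      · exact ⟨l, h1, by omega, rfl⟩

/-- `c 0, ..., c (n-1)` enumerates `S` as an induced cycle. -/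
structure Par {W : Type*} (G : SimpleGraph W) (S : Set W) (n : ℕ) (c : ℕ → W) : Prop where
  three : 3 ≤ n
  mem : ∀ w, w ∈ S ↔ ∃ i < n, c i = w
  inj : ∀ i < n, ∀ j < n, c i = c j → i = j
  adj : ∀ i j, i < j → j < n → (G.Adj (c i) (c j) ↔ j = i + 1 ∨ (i = 0 ∧ j + 1 = n))

def Cyc {W : Type*} (G : SimpleGraph W) (S : Set W) : Prop :=
  S.Nonempty ∧ ∀ x ∈ S, ∃ n c, Par G S n c ∧ c 0 = x

theorem Par.seg {W : Type*} {G : SimpleGraph W} {S : Set W} {n : ℕ} {c : ℕ → W}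
    (h : Par G S n c) (i m : ℕ) (him : i ≤ m) (hm : m < n) :
    Conn G {w | ∃ l, i ≤ l ∧ l ≤ m ∧ c l = w} :=
  seg_conn c i m him (fun l _ h2 => (h.adj l (l + 1) (by omega) (by omega)).2 (Or.inl rfl))

theorem Cyc.conn {W : Type*} {G : SimpleGraph W} {S : Set W} (h : Cyc G S) : Conn G S := by
  obtain ⟨⟨x, hx⟩, h⟩ := h
  obtain ⟨n, c, hp, rfl⟩ := h x hx
  have h3 := hp.three
  convert hp.seg 0 (n - 1) (by omega) (by omega) using 1
  ext w
  rw [hp.mem]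
  constructor
  · rintro ⟨i, hi, rfl⟩; exact ⟨i, by omega, by omega, rfl⟩
  · rintro ⟨i, _, hi, rfl⟩; exact ⟨i, by omega, rfl⟩

/-- Every vertex of a cycle has exactly two neighbours on it. -/
theorem Cyc.two {W : Type*} {G : SimpleGraph W} {S : Set W} (h : Cyc G S) {x : W} (hx : x ∈ S) :
    ∃ a b, a ≠ b ∧ a ∈ S ∧ b ∈ S ∧ ∀ y ∈ S, G.Adj x y ↔ y = a ∨ y = b := by
  obtain ⟨n, c, hp, rfl⟩ := h.2 x hx
  have h3 := hp.three
  refine ⟨c 1, c (n - 1), ?_, (hp.mem _).2 ⟨1, by omega, rfl⟩,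
    (hp.mem _).2 ⟨n - 1, by omega, rfl⟩, ?_⟩
  · intro he
    have := hp.inj _ (by omega) _ (by omega) he
    omega
  · intro y hy
    obtain ⟨i, hi, rfl⟩ := (hp.mem y).1 hy
    constructor
    · intro hadj
      rcases Nat.eq_zero_or_pos i with h0 | h0
      · subst h0; exact absurd hadj (G.loopless.irrefl _)
      · rcases (hp.adj 0 i h0 hi).1 hadj with h | ⟨_, h⟩
        · left; rw [h]
        · right; congr 1; omega
    · rintro (h | h)
      · rw [h]; exact (hp.adj 0 1 (by omega) (by omega)).2 (Or.inl rfl)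
      · rw [h]; exact (hp.adj 0 (n - 1) (by omega) (by omega)).2 (Or.inr ⟨rfl, by omega⟩)

theorem Cyc.eq_of_subset {W : Type*} {G : SimpleGraph W} {S T : Set W} (hS : Cyc G S)
    (hT : Cyc G T) (h : S ⊆ T) : S = T := by
  by_contra hne
  obtain ⟨a, ha, b, hb, hbS, hab⟩ := hT.conn.2 S h hS.1 hne
  obtain ⟨u, v, huv, hu, hv, h1⟩ := hS.two ha
  obtain ⟨u', v', huv', hu', hv', h2⟩ := hT.two (h ha)
  have e1 := (h2 u (h hu)).1 ((h1 u hu).2 (Or.inl rfl))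
  have e2 := (h2 v (h hv)).1 ((h1 v hv).2 (Or.inr rfl))
  have e3 := (h2 b hb).1 hab
  have e4 : b ≠ u := fun h => hbS (h ▸ hu)
  have e5 : b ≠ v := fun h => hbS (h ▸ hv)
  grind

/-- The two arcs determined by two nonadjacent vertices of an induced cycle. -/
theorem Cyc.arcs {W : Type*} {G : SimpleGraph W} {S : Set W} (hS : Cyc G S) {p q : W}
    (hp : p ∈ S) (hq : q ∈ S) (hpq : p ≠ q) (hn : ¬ G.Adj p q) :
    ∃ A B : Set W, S = A ∪ B ∪ {p, q} ∧ Disjoint A B ∧ p ∉ A ∧ p ∉ B ∧ q ∉ A ∧ q ∉ B ∧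
      Conn G A ∧ Conn G B ∧ (∃ a ∈ A, G.Adj p a) ∧ (∃ a ∈ A, G.Adj q a) ∧
      (∃ a ∈ B, G.Adj p a) ∧ (∃ a ∈ B, G.Adj q a) ∧ (∀ a ∈ A, ∀ b ∈ B, ¬ G.Adj a b) := by
  obtain ⟨n, c, h, rfl⟩ := hS.2 p hp
  obtain ⟨m, hm, rfl⟩ := (h.mem q).1 hq
  have h3 := h.three
  have hm0 : 0 < m := by
    rcases Nat.eq_zero_or_pos m with h | h
    · subst h; exact absurd rfl hpq
    · exact h
  rw [h.adj 0 m hm0 hm] at hn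
  push Not at hn
  have hm1 : m ≠ 1 := by simpa using hn.1
  have hmn : m + 1 ≠ n := hn.2 rfl
  have inj : ∀ {i j : ℕ}, i < n → j < n → c i = c j → i = j := fun hi hj he =>
    h.inj _ hi _ hj he
  refine ⟨{w | ∃ l, 1 ≤ l ∧ l ≤ m - 1 ∧ c l = w}, {w | ∃ l, m + 1 ≤ l ∧ l ≤ n - 1 ∧ c l = w},
    ?_, ?_, ?_, ?_, ?_, ?_, h.seg _ _ (by omega) (by omega), h.seg _ _ (by omega) (by omega),
    ?_, ?_, ?_, ?_, ?_⟩
  · ext w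
    rw [h.mem]
    constructor
    · rintro ⟨i, hi, rfl⟩
      rcases Nat.lt_trichotomy i m with h1 | h1 | h1
      · rcases Nat.eq_zero_or_pos i with h0 | h0
        · subst h0; right; left; rfl
        · left; left; exact ⟨i, by omega, by omega, rfl⟩
      · subst h1; right; right; rfl
      · left; right; exact ⟨i, by omega, by omega, rfl⟩
    · rintro ((⟨l, h1, h2, rfl⟩ | ⟨l, h1, h2, rfl⟩) | (rfl | rfl))
      · exact ⟨l, by omega, rfl⟩
      · exact ⟨l, by omega, rfl⟩
      · exact ⟨0, by omega, rfl⟩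
      · exact ⟨m, by omega, rfl⟩
  · rw [Set.disjoint_left]
    rintro w ⟨l, h1, h2, rfl⟩ ⟨l', h3, h4, he⟩
    have := inj (by omega) (by omega) he
    omega
  · rintro ⟨l, h1, h2, he⟩
    have := inj (by omega) (by omega) he
    omega
  · rintro ⟨l, h1, h2, he⟩
    have := inj (by omega) (by omega) he
    omega
  · rintro ⟨l, h1, h2, he⟩
    have := inj (by omega) (by omega) he
    omega
  · rintro ⟨l, h1, h2, he⟩
    have := inj (by omega) (by omega) he
    omega
  · exact ⟨c 1, ⟨1, by omega, by omega, rfl⟩, (h.adj _ _ (by omega) (by omega)).2 (by omega)⟩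
  · exact ⟨c (m - 1), ⟨m - 1, by omega, by omega, rfl⟩,
      ((h.adj (m - 1) m (by omega) (by omega)).2 (by omega)).symm⟩
  · exact ⟨c (n - 1), ⟨n - 1, by omega, by omega, rfl⟩,
      (h.adj _ _ (by omega) (by omega)).2 (by omega)⟩
  · exact ⟨c (m + 1), ⟨m + 1, by omega, by omega, rfl⟩,
      (h.adj _ _ (by omega) (by omega)).2 (by omega)⟩
  · rintro a ⟨l, h1, h2, rfl⟩ b ⟨l', h3, h4, rfl⟩ hadj
    rw [h.adj _ _ (by omega) (by omega)] at hadj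
    omega

theorem Cyc.rest {W : Type*} {G : SimpleGraph W} {S : Set W} (hS : Cyc G S) {p q : W}
    (hp : p ∈ S) (hq : q ∈ S) (hn : G.Adj p q) :
    Conn G (S \ {p, q}) ∧ (∃ a ∈ S \ {p, q}, G.Adj p a) ∧ (∃ a ∈ S \ {p, q}, G.Adj q a) := by
  obtain ⟨n, c, h, rfl⟩ := hS.2 p hp
  obtain ⟨m, hm, rfl⟩ := (h.mem q).1 hq
  have h3 := h.three
  have inj : ∀ {i j : ℕ}, i < n → j < n → c i = c j → i = j := fun hi hj he =>
    h.inj _ hi _ hj he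
  have hm0 : 0 < m := by
    rcases Nat.eq_zero_or_pos m with h | h
    · subst h; exact absurd hn (G.loopless.irrefl _)
    · exact h
  rw [h.adj 0 m hm0 hm] at hn
  rcases hn with hn | ⟨_, hn⟩
  · have hm1 : m = 1 := by omega
    subst hm1
    have he : S \ {c 0, c 1} = {w | ∃ l, 2 ≤ l ∧ l ≤ n - 1 ∧ c l = w} := by
      ext w
      constructor
      · rintro ⟨hw, hw2⟩
        obtain ⟨i, hi, rfl⟩ := (h.mem w).1 hw
        refine ⟨i, ?_, by omega, rfl⟩
        rcases i with _ | _ | i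
        · exact absurd (Or.inl rfl) hw2
        · exact absurd (Or.inr rfl) hw2
        · omega
      · rintro ⟨l, h1, h2, rfl⟩
        refine ⟨(h.mem _).2 ⟨l, by omega, rfl⟩, ?_⟩
        rintro (he | he)
        · have := inj (by omega) (by omega) he
          omega
        · have := inj (by omega) (by omega) he
          omega
    rw [he]
    refine ⟨h.seg _ _ (by omega) (by omega), ⟨c (n - 1), ⟨n - 1, by omega, by omega, rfl⟩, ?_⟩,
      ⟨c 2, ⟨2, by omega, by omega, rfl⟩, ?_⟩⟩
    · exact (h.adj _ _ (by omega) (by omega)).2 (by omega)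
    · exact (h.adj _ _ (by omega) (by omega)).2 (by omega)
  · have he : S \ {c 0, c m} = {w | ∃ l, 1 ≤ l ∧ l ≤ m - 1 ∧ c l = w} := by
      ext w
      constructor
      · rintro ⟨hw, hw2⟩
        obtain ⟨i, hi, rfl⟩ := (h.mem w).1 hw
        have h0 : i ≠ 0 := by rintro rfl; exact hw2 (Or.inl rfl)
        have h1 : i ≠ m := by rintro rfl; exact hw2 (Or.inr rfl)
        exact ⟨i, by omega, by omega, rfl⟩
      · rintro ⟨l, h1, h2, rfl⟩
        refine ⟨(h.mem _).2 ⟨l, by omega, rfl⟩, ?_⟩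
        rintro (he | he)
        · have := inj (by omega) (by omega) he
          omega
        · have := inj (by omega) (by omega) he
          omega
    rw [he]
    refine ⟨h.seg _ _ (by omega) (by omega), ⟨c 1, ⟨1, by omega, by omega, rfl⟩, ?_⟩,
      ⟨c (m - 1), ⟨m - 1, by omega, by omega, rfl⟩, ?_⟩⟩
    · exact (h.adj _ _ (by omega) (by omega)).2 (by omega)
    · exact ((h.adj (m - 1) m (by omega) (by omega)).2 (by omega)).symm

/-- Two sets joined by an edge. -/
def Touch {W : Type*} (G : SimpleGraph W) (A B : Set W) : Prop := ∃ a ∈ A, ∃ b ∈ B, G.Adj a b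

theorem Touch.symm {W : Type*} {G : SimpleGraph W} {A B : Set W} (h : Touch G A B) :
    Touch G B A := by
  obtain ⟨a, ha, b, hb, hab⟩ := h
  exact ⟨b, hb, a, ha, hab.symm⟩

theorem Touch.mono {W : Type*} {G : SimpleGraph W} {A B A' B' : Set W} (h : Touch G A B)
    (hA : A ⊆ A') (hB : B ⊆ B') : Touch G A' B' := by
  obtain ⟨a, ha, b, hb, hab⟩ := h
  exact ⟨a, hA ha, b, hB hb, hab⟩

theorem k33_of {W : Type*} {G : SimpleGraph W} {p q : W} {D A B Q : Set W} (hpq : p ≠ q)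
    (hD : Conn G D) (hA : Conn G A) (hB : Conn G B) (hQ : Conn G Q)
    (hDA : Disjoint D A) (hDB : Disjoint D B) (hDQ : Disjoint D Q)
    (hAB : Disjoint A B) (hAQ : Disjoint A Q) (hBQ : Disjoint B Q)
    (hpD : p ∉ D) (hpA : p ∉ A) (hpB : p ∉ B) (hpQ : p ∉ Q)
    (hqD : q ∉ D) (hqA : q ∉ A) (hqB : q ∉ B) (hqQ : q ∉ Q)
    (tpA : ∃ a ∈ A, G.Adj p a) (tpB : ∃ a ∈ B, G.Adj p a) (tpQ : ∃ a ∈ Q, G.Adj p a)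
    (tqA : ∃ a ∈ A, G.Adj q a) (tqB : ∃ a ∈ B, G.Adj q a) (tqQ : ∃ a ∈ Q, G.Adj q a)
    (tDA : Touch G D A) (tDB : Touch G D B) (tDQ : Touch G D Q) :
    HasMinor G (completeBipartiteGraph (Fin 3) (Fin 3)) := by
  have key : ∀ i j : Fin 3, Touch G ((![{p}, {q}, D] : Fin 3 → Set W) i)
      ((![A, B, Q] : Fin 3 → Set W) j) := by
    intro i j
    fin_cases i <;> fin_cases j
    · exact ⟨p, rfl, tpA⟩
    · exact ⟨p, rfl, tpB⟩
    · exact ⟨p, rfl, tpQ⟩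
    · exact ⟨q, rfl, tqA⟩
    · exact ⟨q, rfl, tqB⟩
    · exact ⟨q, rfl, tqQ⟩
    · exact tDA
    · exact tDB
    · exact tDQ
  refine ⟨Sum.elim ![{p}, {q}, D] ![A, B, Q], ?_, ?_, ?_⟩
  · rintro (i | i) <;> apply induce_of_conn <;> fin_cases i
    · exact conn_singleton p
    · exact conn_singleton q
    · exact hD
    · exact hA
    · exact hB
    · exact hQ
  · have s1 : ∀ {x : W} {S : Set W}, x ∉ S → Disjoint {x} S := fun h =>
      Set.disjoint_singleton_left.2 h
    have hpq' : Disjoint ({p} : Set W) {q} := s1 hpq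
    rintro (i | i) (j | j) hij <;> fin_cases i <;> fin_cases j <;>
      first
        | exact absurd rfl hij
        | exact hpq'
        | exact hpq'.symm
        | exact s1 (by assumption)
        | exact (s1 (by assumption)).symm
        | (apply Disjoint.symm; assumption)
        | assumption
  · rintro (i | i) (j | j) hij
    · simp at hij
    · exact key i j
    · exact (key j i).symm
    · simp at hij

theorem k5_of {W : Type*} {G : SimpleGraph W} {p q : W} {A B Q : Set W} (hpq : G.Adj p q)
    (hA : Conn G A) (hB : Conn G B) (hQ : Conn G Q)
    (hAB : Disjoint A B) (hAQ : Disjoint A Q) (hBQ : Disjoint B Q)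
    (hpA : p ∉ A) (hpB : p ∉ B) (hpQ : p ∉ Q)
    (hqA : q ∉ A) (hqB : q ∉ B) (hqQ : q ∉ Q)
    (tpA : ∃ a ∈ A, G.Adj p a) (tpB : ∃ a ∈ B, G.Adj p a) (tpQ : ∃ a ∈ Q, G.Adj p a)
    (tqA : ∃ a ∈ A, G.Adj q a) (tqB : ∃ a ∈ B, G.Adj q a) (tqQ : ∃ a ∈ Q, G.Adj q a)
    (tAB : Touch G A B) (tAQ : Touch G A Q) (tBQ : Touch G B Q) :
    HasMinor G (completeGraph (Fin 5)) := by
  have tpq : Touch G {p} {q} := ⟨p, rfl, q, rfl, hpq⟩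
  have u1 : Touch G {p} A := ⟨p, rfl, tpA⟩
  have u2 : Touch G {p} B := ⟨p, rfl, tpB⟩
  have u3 : Touch G {p} Q := ⟨p, rfl, tpQ⟩
  have u4 : Touch G {q} A := ⟨q, rfl, tqA⟩
  have u5 : Touch G {q} B := ⟨q, rfl, tqB⟩
  have u6 : Touch G {q} Q := ⟨q, rfl, tqQ⟩
  have key : ∀ i j : Fin 5, i ≠ j → Touch G ((![{p}, {q}, A, B, Q] : Fin 5 → Set W) i)
      ((![{p}, {q}, A, B, Q] : Fin 5 → Set W) j) := by
    intro i j hij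
    fin_cases i <;> fin_cases j <;>
      first
        | exact absurd rfl hij
        | assumption
        | (apply Touch.symm; assumption)
  refine ⟨![{p}, {q}, A, B, Q], ?_, ?_, ?_⟩
  · intro i
    apply induce_of_conn
    fin_cases i
    · exact conn_singleton p
    · exact conn_singleton q
    · exact hA
    · exact hB
    · exact hQ
  · have s1 : ∀ {x : W} {S : Set W}, x ∉ S → Disjoint {x} S := fun h =>
      Set.disjoint_singleton_left.2 h
    have hpq' : Disjoint ({p} : Set W) {q} := s1 hpq.ne
    intro i j hij
    fin_cases i <;> fin_cases j <;>
      first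
        | exact absurd rfl hij
        | exact hpq'
        | exact hpq'.symm
        | exact s1 (by assumption)
        | exact (s1 (by assumption)).symm
        | (apply Disjoint.symm; assumption)
        | assumption
  · intro i j hij
    exact key i j (by simpa using hij)

/-- Minimum degree three, in the form we need. -/
def Deg3 {W : Type*} (G : SimpleGraph W) : Prop :=
  ∀ x a b : W, ∃ y, G.Adj x y ∧ y ≠ a ∧ y ≠ b

/-- Peripheral: induced nonseparating cycle. -/
def Peri {W : Type*} (G : SimpleGraph W) (S : Set W) : Prop := Cyc G S ∧ Conn G Sᶜ

theorem comp_touch {W : Type*} {G : SimpleGraph W} {X Q D R : Set W} (hX : Conn G X)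
    (hR : R = X \ Q) (hDR : D ⊆ R) (hD : Conn G D) (hQ : Q.Nonempty) (hQX : Q ⊆ X)
    (hm : ∀ a ∈ D, ∀ b ∈ R, b ∉ D → ¬ G.Adj a b) : Touch G D Q := by
  subst hR
  obtain ⟨z, hz⟩ := hQ
  obtain ⟨a, ha, b, hb, hbD, hab⟩ := hX.2 D (fun w hw => (hDR hw).1) hD.1
    (fun he => (hDR (he ▸ hQX hz : z ∈ D)).2 hz)
  refine ⟨a, ha, b, ?_, hab⟩
  by_contra hbQ
  exact hm a ha b ⟨hb, hbQ⟩ hbD hab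

/-- The core case: two peripheral cycles with one arc of the first contained in the second. -/
theorem arc_case {W : Type*} [Finite W] {G : SimpleGraph W} (h3 : Deg3 G)
    {S1 S2 A B Q : Set W} {p q : W} (hS1 : Peri G S1) (hS2 : Peri G S2)
    (hpq : p ≠ q) (hS : S1 = A ∪ B ∪ {p, q}) (hAB : Disjoint A B)
    (hpA : p ∉ A) (hpB : p ∉ B) (hqA : q ∉ A) (hqB : q ∉ B)
    (hA : Conn G A) (hB : Conn G B)
    (tpA : ∃ a ∈ A, G.Adj p a) (tqA : ∃ a ∈ A, G.Adj q a)
    (tpB : ∃ a ∈ B, G.Adj p a) (tqB : ∃ a ∈ B, G.Adj q a)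
    (nAB : ∀ a ∈ A, ∀ b ∈ B, ¬ G.Adj a b)
    (hQ : Conn G Q) (hQS : Q ⊆ S2 \ S1) (tpQ : ∃ a ∈ Q, G.Adj p a) (tqQ : ∃ a ∈ Q, G.Adj q a)
    (hp2 : p ∈ S2) (hq2 : q ∈ S2)
    (hM : Conn G (S2 \ (Q ∪ {p, q})))
    (hAS : A ⊆ S2) : HasMinor G (completeBipartiteGraph (Fin 3) (Fin 3)) := by
  have hA1 : A ⊆ S1 := by rw [hS]; intro w hw; exact Or.inl (Or.inl hw)
  have hB1 : B ⊆ S1 := by rw [hS]; intro w hw; exact Or.inl (Or.inr hw)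
  have hp1 : p ∈ S1 := by rw [hS]; right; left; rfl
  have hq1 : q ∈ S1 := by rw [hS]; right; right; rfl
  -- neighbours of `a ∈ A` in `S2` lie in `A ∪ {p,q}`
  have hnb : ∀ a ∈ A, ∃ u v, ∀ y ∈ S1 ∪ S2, G.Adj a y →
      (y = u ∨ y = v) ∧ (y ∈ A ∨ y = p ∨ y = q) := by
    intro a ha
    obtain ⟨u, v, huv, hu, hv, h1⟩ := hS1.1.two (hA1 ha)
    obtain ⟨u', v', huv', hu', hv', h2⟩ := hS2.1.two (hAS ha)
    have au := (h1 u hu).2 (Or.inl rfl)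
    have av := (h1 v hv).2 (Or.inr rfl)
    have m1 : ∀ y ∈ S1, G.Adj a y → y ∈ A ∨ y = p ∨ y = q := by
      intro y hy hay
      rw [hS] at hy
      rcases hy with (hy | hy) | hy
      · exact Or.inl hy
      · exact absurd hay (nAB a ha y hy)
      · exact Or.inr hy
    have m2 : ∀ y ∈ S1, G.Adj a y → y ∈ S2 := by
      intro y hy hay
      rcases m1 y hy hay with h | rfl | rfl
      · exact hAS h
      · exact hp2
      · exact hq2
    have e1 := (h2 u (m2 u hu au)).1 au
    have e2 := (h2 v (m2 v hv av)).1 av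
    refine ⟨u, v, ?_⟩
    intro y hy hay
    have : y = u ∨ y = v := by
      rcases hy with hy | hy
      · exact (h1 y hy).1 hay
      · have := (h2 y hy).1 hay
        grind
    refine ⟨this, ?_⟩
    rcases this with rfl | rfl
    · exact m1 _ hu au
    · exact m1 _ hv av
  -- `A` is everything in `S2` apart from `Q` and `p, q`
  have hAM : A = S2 \ (Q ∪ {p, q}) := by
    by_contra hne
    obtain ⟨a, ha, b, hb, hbA, hab⟩ := hM.2 A (by
      intro w hw
      refine ⟨hAS hw, ?_⟩
      rintro (h | rfl | rfl)
      · exact (hQS h).2 (hA1 hw)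
      · exact hpA hw
      · exact hqA hw) hA.1 hne
    obtain ⟨u, v, h⟩ := hnb a ha
    rcases (h b (Or.inr hb.1) hab).2 with h | h | h
    · exact hbA h
    · exact hb.2 (Or.inr (Or.inl h))
    · exact hb.2 (Or.inr (Or.inr h))
  have hS2e : ∀ w ∈ S2, w ∈ A ∨ w ∈ Q ∨ w = p ∨ w = q := by
    intro w hw
    by_cases h : w ∈ Q ∪ {p, q}
    · exact Or.inr h
    · left; rw [hAM]; exact ⟨hw, h⟩
  have hBS2 : B ⊆ S2ᶜ := by
    intro w hw hw2
    rcases hS2e w hw2 with h | h | h | h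
    · exact Set.disjoint_left.1 hAB h hw
    · exact (hQS h).2 (hB1 hw)
    · exact hpB (h ▸ hw)
    · exact hqB (h ▸ hw)
  obtain ⟨a, ha⟩ := hA.1
  obtain ⟨u, v, h⟩ := hnb a ha
  obtain ⟨y, hay, hyu, hyv⟩ := h3 a u v
  have hyS : y ∈ (S1 ∪ S2)ᶜ := fun hy => by
    rcases (h y hy hay).1 with h | h
    · exact hyu h
    · exact hyv h
  obtain ⟨D, hyD, hDR, hD, hDm⟩ := exists_comp (G := G) (conn_singleton y)
    (Set.singleton_subset_iff.2 hyS)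
  have e1 : (S1 ∪ S2)ᶜ = S1ᶜ \ Q := by
    ext w
    constructor
    · intro hw
      exact ⟨fun h => hw (Or.inl h), fun h => hw (Or.inr (hQS h).1)⟩
    · rintro ⟨hw1, hw2⟩ (h | h)
      · exact hw1 h
      · rcases hS2e w h with h | h | rfl | rfl
        · exact hw1 (hA1 h)
        · exact hw2 h
        · exact hw1 hp1
        · exact hw1 hq1
  have e2 : (S1 ∪ S2)ᶜ = S2ᶜ \ B := by
    ext w
    constructor
    · intro hw
      exact ⟨fun h => hw (Or.inr h), fun h => hw (Or.inl (hB1 h))⟩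
    · rintro ⟨hw1, hw2⟩ (h | h)
      · rw [hS] at h
        rcases h with (h | h) | rfl | rfl
        · exact hw1 (hAS h)
        · exact hw2 h
        · exact hw1 hp2
        · exact hw1 hq2
      · exact hw1 h
  have tDQ := comp_touch hS1.2 e1 hDR hD hQ.1 (fun w hw => (hQS hw).2) hDm
  have tDB := comp_touch hS2.2 e2 hDR hD hB.1 hBS2 hDm
  have dis : ∀ {T : Set W}, T ⊆ S1 → Disjoint D T := fun hT =>
    Set.disjoint_left.2 fun w h1 h2 => hDR h1 (Or.inl (hT h2))
  have disQ : ∀ {T : Set W}, T ⊆ S1 → Disjoint T Q := fun hT =>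
    Set.disjoint_left.2 fun w h1 h2 => (hQS h2).2 (hT h1)
  exact k33_of hpq hD hA hB hQ (dis hA1) (dis hB1)
    (Set.disjoint_left.2 fun w h1 h2 => hDR h1 (Or.inr (hQS h2).1)) hAB (disQ hA1) (disQ hB1)
    (fun h => hDR h (Or.inl hp1)) hpA hpB (fun h => (hQS h).2 hp1)
    (fun h => hDR h (Or.inl hq1)) hqA hqB (fun h => (hQS h).2 hq1)
    tpA tpB tpQ tqA tqB tqQ ⟨y, hyD rfl, a, ha, hay.symm⟩ tDB tDQ

/-- Two peripheral cycles of a `K₃,₃`-minor-free graph sharing three vertices coincide. -/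
theorem peri_inter {W : Type*} [Finite W] {G : SimpleGraph W} (h3 : Deg3 G)
    (hno : ¬ HasMinor G (completeBipartiteGraph (Fin 3) (Fin 3)))
    {S1 S2 : Set W} (hS1 : Peri G S1) (hS2 : Peri G S2)
    {x y z : W} (hx1 : x ∈ S1) (hx2 : x ∈ S2) (hy1 : y ∈ S1) (hy2 : y ∈ S2)
    (hz1 : z ∈ S1) (hz2 : z ∈ S2) (hxy : x ≠ y) (hxz : x ≠ z) (hyz : y ≠ z) : S1 = S2 := by
  by_contra hne
  have hnsub : ¬ S2 ⊆ S1 := fun h => hne (hS2.1.eq_of_subset hS1.1 h).symm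
  obtain ⟨s, hs2, hs1⟩ := Set.not_subset.1 hnsub
  obtain ⟨n, c, hP, rfl⟩ := hS2.1.2 s hs2
  have hn3 := hP.three
  have inj : ∀ {i j : ℕ}, i < n → j < n → c i = c j → i = j := fun hi hj he =>
    hP.inj _ hi _ hj he
  classical
  let I := (Finset.range n).filter (fun i => c i ∈ S1)
  obtain ⟨ix, hix, rfl⟩ := (hP.mem x).1 hx2
  obtain ⟨iy, hiy, rfl⟩ := (hP.mem y).1 hy2
  obtain ⟨iz, hiz, rfl⟩ := (hP.mem z).1 hz2
  have mI : ∀ i, i < n → c i ∈ S1 → i ∈ I := fun i h1 h2 =>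
    Finset.mem_filter.2 ⟨Finset.mem_range.2 h1, h2⟩
  have hI : I.Nonempty := ⟨ix, mI ix hix hx1⟩
  obtain ⟨j, hjI, hjmin⟩ := Finset.exists_min_image I id hI
  obtain ⟨k, hkI, hkmax⟩ := Finset.exists_max_image I id hI
  simp only [id] at hjmin hkmax
  have hj := Finset.mem_filter.1 hjI
  have hk := Finset.mem_filter.1 hkI
  have hjn := Finset.mem_range.1 hj.1
  have hkn := Finset.mem_range.1 hk.1
  have b1 := hjmin _ (mI ix hix hx1)
  have b2 := hjmin _ (mI iy hiy hy1)
  have b3 := hjmin _ (mI iz hiz hz1)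
  have b4 := hkmax _ (mI ix hix hx1)
  have b5 := hkmax _ (mI iy hiy hy1)
  have b6 := hkmax _ (mI iz hiz hz1)
  have n1 : ix ≠ iy := fun h => hxy (by rw [h])
  have n2 : ix ≠ iz := fun h => hxz (by rw [h])
  have n3 : iy ≠ iz := fun h => hyz (by rw [h])
  have hjk : j + 2 ≤ k := by omega
  have hj0 : 0 < j := by
    rcases Nat.eq_zero_or_pos j with h | h
    · rw [h] at hj; exact absurd hj.2 hs1
    · exact h
  have hpq : c j ≠ c k := fun h => by
    have := inj hjn hkn h
    omega
  have hnadj : ¬ G.Adj (c j) (c k) := by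
    rw [hP.adj j k (by omega) hkn]; omega
  -- the outer part
  let Q : Set W := {w | ∃ l, l < n ∧ (l < j ∨ k < l) ∧ c l = w}
  have hQconn : Conn G Q := by
    have c1 := hP.seg 0 (j - 1) (by omega) (by omega)
    by_cases hkl : k + 1 < n
    · have c2 := hP.seg (k + 1) (n - 1) (by omega) (by omega)
      have := conn_union c1 c2 ⟨c 0, ⟨0, by omega, by omega, rfl⟩, c (n - 1),
        ⟨n - 1, by omega, by omega, rfl⟩, Or.inr ((hP.adj _ _ (by omega) (by omega)).2 (by omega))⟩
      convert this using 1
      ext w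
      constructor
      · rintro ⟨l, h1, h2 | h2, rfl⟩
        · left; exact ⟨l, by omega, by omega, rfl⟩
        · right; exact ⟨l, by omega, by omega, rfl⟩
      · rintro (⟨l, h1, h2, rfl⟩ | ⟨l, h1, h2, rfl⟩)
        · exact ⟨l, by omega, by omega, rfl⟩
        · exact ⟨l, by omega, by omega, rfl⟩
    · convert c1 using 1
      ext w
      constructor
      · rintro ⟨l, h1, h2, rfl⟩
        exact ⟨l, by omega, by omega, rfl⟩
      · rintro ⟨l, h1, h2, rfl⟩
        exact ⟨l, by omega, by omega, rfl⟩
  have hQS : Q ⊆ S2 \ S1 := by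
    rintro w ⟨l, h1, h2, rfl⟩
    refine ⟨(hP.mem _).2 ⟨l, h1, rfl⟩, fun h => ?_⟩
    have e1 := hjmin _ (mI l h1 h)
    have e2 := hkmax _ (mI l h1 h)
    omega
  have tpQ : ∃ a ∈ Q, G.Adj (c j) a :=
    ⟨c (j - 1), ⟨j - 1, by omega, by omega, rfl⟩,
      ((hP.adj (j - 1) j (by omega) (by omega)).2 (by omega)).symm⟩
  have tqQ : ∃ a ∈ Q, G.Adj (c k) a := by
    by_cases hkl : k + 1 < n
    · exact ⟨c (k + 1), ⟨k + 1, by omega, by omega, rfl⟩,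
        (hP.adj _ _ (by omega) (by omega)).2 (by omega)⟩
    · exact ⟨c 0, ⟨0, by omega, by omega, rfl⟩,
        ((hP.adj 0 k (by omega) (by omega)).2 (by omega)).symm⟩
  have hp2 : c j ∈ S2 := (hP.mem _).2 ⟨j, hjn, rfl⟩
  have hq2 : c k ∈ S2 := (hP.mem _).2 ⟨k, hkn, rfl⟩
  have hM : Conn G (S2 \ (Q ∪ {c j, c k})) := by
    convert hP.seg (j + 1) (k - 1) (by omega) (by omega) using 1
    ext w
    constructor
    · rintro ⟨hw, hw2⟩
      obtain ⟨l, hl, rfl⟩ := (hP.mem w).1 hw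
      have g1 : ¬ (l < j ∨ k < l) := fun h => hw2 (Or.inl ⟨l, hl, h, rfl⟩)
      have g2 : l ≠ j := fun h => hw2 (Or.inr (Or.inl (by rw [h])))
      have g3 : l ≠ k := fun h => hw2 (Or.inr (Or.inr (by rw [h]; rfl)))
      exact ⟨l, by omega, by omega, rfl⟩
    · rintro ⟨l, h1, h2, rfl⟩
      refine ⟨(hP.mem _).2 ⟨l, by omega, rfl⟩, ?_⟩
      rintro (⟨l', h1', h2', he⟩ | he | he)
      · have := inj (by omega) (by omega) he
        omega
      · have := inj (by omega) (by omega) he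
        omega
      · have := inj (by omega) (by omega) he
        omega
  obtain ⟨A, B, hS, hAB, hpA, hpB, hqA, hqB, hA, hB, tpA, tqA, tpB, tqB, nAB⟩ :=
    hS1.1.arcs hj.2 hk.2 hpq hnadj
  by_cases hAS : A ⊆ S2
  · exact hno (arc_case h3 hS1 hS2 hpq hS hAB hpA hpB hqA hqB hA hB tpA tqA tpB tqB nAB hQconn hQS
      tpQ tqQ hp2 hq2 hM hAS)
  by_cases hBS : B ⊆ S2
  · exact hno (arc_case h3 hS1 hS2 hpq (by rw [hS, Set.union_comm A B]) hAB.symm hpB hpA hqB hqA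
      hB hA tpB tqB tpA tqA (fun a ha b hb h => nAB b hb a ha h.symm) hQconn hQS
      tpQ tqQ hp2 hq2 hM hBS)
  obtain ⟨a, ha, haS⟩ := Set.not_subset.1 hAS
  obtain ⟨b, hb, hbS⟩ := Set.not_subset.1 hBS
  have hA1 : A ⊆ S1 := by rw [hS]; intro w hw; exact Or.inl (Or.inl hw)
  have hB1 : B ⊆ S1 := by rw [hS]; intro w hw; exact Or.inl (Or.inr hw)
  rcases link (G := G) (X := S2ᶜ) (A := A \ S2) (B := B \ S2) (R := (S1 ∪ S2)ᶜ) hS2.2 (by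
      ext w
      constructor
      · intro hw
        by_cases hw1 : w ∈ S1
        · left
          have hw1' := hw1
          rw [hS] at hw1'
          rcases hw1' with (h | h) | rfl | rfl
          · exact Or.inl ⟨h, hw⟩
          · exact Or.inr ⟨h, hw⟩
          · exact absurd hp2 hw
          · exact absurd hq2 hw
        · right
          rintro (h | h)
          · exact hw1 h
          · exact hw h
      · rintro ((h | h) | h)
        · exact h.2
        · exact h.2
        · exact fun h' => h (Or.inr h')) ⟨a, ha, haS⟩ ⟨b, hb, hbS⟩
      (hAB.mono Set.sdiff_subset Set.sdiff_subset)
      (Set.disjoint_left.2 fun w h1 h2 => h2 (Or.inl (hB1 h1.1))) with h | h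
  · obtain ⟨a', ha', b', hb', hab⟩ := h
    exact nAB a' ha'.1 b' hb'.1 hab
  · obtain ⟨D0, hD0R, hD0, _, ⟨a', ha', d, hd, had⟩, ⟨b', hb', d', hd', hbd⟩⟩ := h
    obtain ⟨D, hD0D, hDR, hD, hDm⟩ := exists_comp (G := G) (R := S1ᶜ \ Q) hD0
      (fun w hw => ⟨fun h => hD0R hw (Or.inl h), fun h => hD0R hw (Or.inr (hQS h).1)⟩)
    have tDQ := comp_touch hS1.2 rfl hDR hD hQconn.1 (fun w hw => (hQS hw).2) hDm
    have dis : ∀ {T : Set W}, T ⊆ S1 → Disjoint D T := fun hT =>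
      Set.disjoint_left.2 fun w h1 h2 => (hDR h1).1 (hT h2)
    have disQ : ∀ {T : Set W}, T ⊆ S1 → Disjoint T Q := fun hT =>
      Set.disjoint_left.2 fun w h1 h2 => (hQS h2).2 (hT h1)
    exact hno (k33_of hpq hD hA hB hQconn (dis hA1) (dis hB1)
      (Set.disjoint_left.2 fun w h1 h2 => (hDR h1).2 h2) hAB (disQ hA1) (disQ hB1)
      (fun h => (hDR h).1 hj.2) hpA hpB (fun h => (hQS h).2 hj.2)
      (fun h => (hDR h).1 hk.2) hqA hqB (fun h => (hQS h).2 hk.2)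
      tpA tpB tpQ tqA tqB tqQ ⟨d, hD0D hd, a', ha'.1, had⟩ ⟨d', hD0D hd', b', hb'.1, hbd⟩ tDQ)

theorem comp_eq {W : Type*} {G : SimpleGraph W} {R D E : Set W} (hD : Conn G D) (hE : Conn G E)
    (hDR : D ⊆ R) (hER : E ⊆ R)
    (hDm : ∀ a ∈ D, ∀ b ∈ R, b ∉ D → ¬ G.Adj a b)
    (hEm : ∀ a ∈ E, ∀ b ∈ R, b ∉ E → ¬ G.Adj a b) {z : W} (hzD : z ∈ D) (hzE : z ∈ E) :
    D = E := by
  have key : ∀ {D E : Set W}, Conn G D → Conn G E → D ⊆ R → E ⊆ R →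
      (∀ a ∈ E, ∀ b ∈ R, b ∉ E → ¬ G.Adj a b) → z ∈ D → z ∈ E → D ⊆ E := by
    intro D E hD hE hDR hER hEm hzD hzE
    by_contra hne
    obtain ⟨a, ha, b, hb, hbn, hab⟩ := hD.2 (D ∩ E) Set.inter_subset_left ⟨z, hzD, hzE⟩
      (fun h => hne (Set.inter_eq_left.1 h))
    exact hEm a ha.2 b (hDR hb) (fun h => hbn ⟨hb, h⟩) hab
  exact Set.Subset.antisymm (key hD hE hDR hER hEm hzD hzE) (key hE hD hER hDR hDm hzE hzD)

theorem pair_link {W : Type*} [Finite W] {G : SimpleGraph W} {X A B R : Set W} (hX : Conn G X)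
    (hcov : X = A ∪ B ∪ R) (hA : Conn G A) (hB : Conn G B)
    (hAB : Disjoint A B) (hBR : Disjoint B R) :
    ∃ D ⊆ R, Conn G (A ∪ D) ∧ Touch G (A ∪ D) B ∧
      (D = ∅ ∨ (Conn G D ∧ (∀ a ∈ D, ∀ b ∈ R, b ∉ D → ¬ G.Adj a b) ∧
        Touch G D A ∧ Touch G D B)) := by
  rcases link hX hcov hA.1 hB.1 hAB hBR with ⟨a, ha, b, hb, hab⟩ |
    ⟨D, hDR, hD, hDm, ⟨a, ha, d, hd, had⟩, ⟨b, hb, d', hd', hbd⟩⟩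
  · refine ⟨∅, Set.empty_subset _, ?_, ?_, Or.inl rfl⟩
    · rwa [Set.union_empty]
    · exact ⟨a, Or.inl ha, b, hb, hab⟩
  · exact ⟨D, hDR, conn_union hA hD ⟨a, ha, d, hd, Or.inr had.symm⟩, ⟨d', Or.inr hd', b, hb, hbd⟩,
      Or.inr ⟨hD, hDm, ⟨d, hd, a, ha, had⟩, ⟨d', hd', b, hb, hbd⟩⟩⟩

theorem cov_aux {W : Type*} {S1 S2 S3 : Set W} {x y : W} (hx3 : x ∈ S3) (hy3 : y ∈ S3)
    (i13 : ∀ w ∈ S1, w ∈ S3 → w = x ∨ w = y) (i23 : ∀ w ∈ S2, w ∈ S3 → w = x ∨ w = y) :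
    S3ᶜ = (S1 \ {x, y}) ∪ (S2 \ {x, y}) ∪ (S1 ∪ S2 ∪ S3)ᶜ := by
  ext w
  constructor
  · intro hw
    have hn : w ∉ ({x, y} : Set W) := by
      rintro (rfl | rfl)
      · exact hw hx3
      · exact hw hy3
    by_cases h1 : w ∈ S1
    · exact Or.inl (Or.inl ⟨h1, hn⟩)
    by_cases h2 : w ∈ S2
    · exact Or.inl (Or.inr ⟨h2, hn⟩)
    right
    rintro ((h | h) | h)
    · exact h1 h
    · exact h2 h
    · exact hw h
  · rintro ((h | h) | h) h3
    · exact h.2 (i13 w h.1 h3)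
    · exact h.2 (i23 w h.1 h3)
    · exact h (Or.inr h3)

theorem peri_three {W : Type*} [Finite W] {G : SimpleGraph W} (h3 : Deg3 G)
    (hno : ¬ HasMinor G (completeBipartiteGraph (Fin 3) (Fin 3)))
    (hno5 : ¬ HasMinor G (completeGraph (Fin 5)))
    {S1 S2 S3 : Set W} (hS1 : Peri G S1) (hS2 : Peri G S2) (hS3 : Peri G S3)
    (h12 : S1 ≠ S2) (h13 : S1 ≠ S3) (h23 : S2 ≠ S3)
    {x y : W} (hxy : G.Adj x y) (hx1 : x ∈ S1) (hy1 : y ∈ S1) (hx2 : x ∈ S2) (hy2 : y ∈ S2)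
    (hx3 : x ∈ S3) (hy3 : y ∈ S3) : False := by
  have inter : ∀ {S T : Set W}, Peri G S → Peri G T → S ≠ T → x ∈ S → y ∈ S → x ∈ T → y ∈ T →
      ∀ w ∈ S, w ∈ T → w = x ∨ w = y := by
    intro S T hS hT hne hxS hyS hxT hyT w hwS hwT
    by_contra hw
    push Not at hw
    exact hne (peri_inter h3 hno hS hT hxS hxT hyS hyT hwS hwT hxy.ne hw.1.symm hw.2.symm)
  have i12 := inter hS1 hS2 h12 hx1 hy1 hx2 hy2
  have i13 := inter hS1 hS3 h13 hx1 hy1 hx3 hy3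
  have i23 := inter hS2 hS3 h23 hx2 hy2 hx3 hy3
  obtain ⟨c1, tx1, ty1⟩ := hS1.1.rest hx1 hy1 hxy
  obtain ⟨c2, tx2, ty2⟩ := hS2.1.rest hx2 hy2 hxy
  obtain ⟨c3, tx3, ty3⟩ := hS3.1.rest hx3 hy3 hxy
  let R : Set W := (S1 ∪ S2 ∪ S3)ᶜ
  have d12 : Disjoint (S1 \ {x, y}) (S2 \ {x, y}) :=
    Set.disjoint_left.2 fun w h1 h2 => h1.2 (i12 w h1.1 h2.1)
  have d13 : Disjoint (S1 \ {x, y}) (S3 \ {x, y}) :=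
    Set.disjoint_left.2 fun w h1 h2 => h1.2 (i13 w h1.1 h2.1)
  have d23 : Disjoint (S2 \ {x, y}) (S3 \ {x, y}) :=
    Set.disjoint_left.2 fun w h1 h2 => h1.2 (i23 w h1.1 h2.1)
  have r1 : Disjoint (S1 \ {x, y}) R :=
    Set.disjoint_left.2 fun w h1 h2 => h2 (Or.inl (Or.inl h1.1))
  have r2 : Disjoint (S2 \ {x, y}) R :=
    Set.disjoint_left.2 fun w h1 h2 => h2 (Or.inl (Or.inr h1.1))
  have r3 : Disjoint (S3 \ {x, y}) R :=
    Set.disjoint_left.2 fun w h1 h2 => h2 (Or.inr h1.1)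
  have cov3 : S3ᶜ = (S1 \ {x, y}) ∪ (S2 \ {x, y}) ∪ R :=
    (cov_aux hx3 hy3 i13 i23).trans (by rfl)
  have cov1 : S1ᶜ = (S2 \ {x, y}) ∪ (S3 \ {x, y}) ∪ R :=
    (cov_aux hx1 hy1 (fun w h1 h2 => i12 w h2 h1) (fun w h1 h2 => i13 w h2 h1)).trans (by simp only [R]; congr 2; ext w; simp only [Set.mem_union]; tauto)
  have cov2 : S2ᶜ = (S3 \ {x, y}) ∪ (S1 \ {x, y}) ∪ R :=
    (cov_aux hx2 hy2 (fun w h1 h2 => i23 w h2 h1) i12).trans (by simp only [R]; congr 2; ext w; simp only [Set.mem_union]; tauto)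
  have hxR : x ∉ R := fun h => h (Or.inr hx3)
  have hyR : y ∉ R := fun h => h (Or.inr hy3)
  have nx : ∀ {S : Set W}, x ∉ S \ {x, y} := fun h => h.2 (Or.inl rfl)
  have ny : ∀ {S : Set W}, y ∉ S \ {x, y} := fun h => h.2 (Or.inr rfl)
  obtain ⟨D, hDR, hcD, tD, hD⟩ := pair_link hS3.2 cov3 c1 c2 d12 r2
  obtain ⟨E, hER, hcE, tE, hE⟩ := pair_link hS1.2 cov1 c2 c3 d23 r3
  obtain ⟨F, hFR, hcF, tF, hF⟩ := pair_link hS2.2 cov2 c3 c1 d13.symm r1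
  have noall : ∀ D' ⊆ R, Conn G D' → Touch G D' (S1 \ {x, y}) → Touch G D' (S2 \ {x, y}) →
      Touch G D' (S3 \ {x, y}) → False := by
    intro D' hD'R hD' t1 t2 t3
    exact hno (k33_of hxy.ne hD' c1 c2 c3 (r1.mono_right hD'R).symm (r2.mono_right hD'R).symm
      (r3.mono_right hD'R).symm d12 d13 d23 (fun h => hxR (hD'R h)) nx nx nx
      (fun h => hyR (hD'R h)) ny ny ny tx1 tx2 tx3 ty1 ty2 ty3 t1 t2 t3)
  have dDE : Disjoint D E := by
    rw [Set.disjoint_left]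
    intro w h1 h2
    rcases hD with rfl | ⟨cD, mD, t1, t2⟩
    · exact h1
    rcases hE with rfl | ⟨cE, mE, t3, t4⟩
    · exact h2
    have := comp_eq cD cE hDR hER mD mE h1 h2
    subst this
    exact noall D hDR cD t1 t2 t4
  have dDF : Disjoint D F := by
    rw [Set.disjoint_left]
    intro w h1 h2
    rcases hD with rfl | ⟨cD, mD, t1, t2⟩
    · exact h1
    rcases hF with rfl | ⟨cE, mE, t3, t4⟩
    · exact h2
    have := comp_eq cD cE hDR hFR mD mE h1 h2
    subst this
    exact noall D hDR cD t1 t2 t3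
  have dEF : Disjoint E F := by
    rw [Set.disjoint_left]
    intro w h1 h2
    rcases hE with rfl | ⟨cD, mD, t1, t2⟩
    · exact h1
    rcases hF with rfl | ⟨cE, mE, t3, t4⟩
    · exact h2
    have := comp_eq cD cE hER hFR mD mE h1 h2
    subst this
    exact noall E hER cD t4 t1 t2
  have dis : ∀ {A B D E : Set W}, Disjoint A B → Disjoint A R → Disjoint B R → D ⊆ R → E ⊆ R →
      Disjoint D E → Disjoint (A ∪ D) (B ∪ E) := by
    intro A B D E h1 h2 h3 h4 h5 h6
    rw [Set.disjoint_union_left, Set.disjoint_union_right, Set.disjoint_union_right]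
    exact ⟨⟨h1, h2.mono_right h5⟩, (h3.mono_right h4).symm, h6⟩
  have up : ∀ {A D : Set W} {z : W}, (∃ a ∈ A, G.Adj z a) → ∃ a ∈ A ∪ D, G.Adj z a := by
    rintro A D z ⟨a, ha, h⟩
    exact ⟨a, Or.inl ha, h⟩
  have nx' : ∀ {S D : Set W}, D ⊆ R → x ∉ (S \ {x, y}) ∪ D := by
    rintro S D hD (h | h)
    · exact nx h
    · exact hxR (hD h)
  have ny' : ∀ {S D : Set W}, D ⊆ R → y ∉ (S \ {x, y}) ∪ D := by
    rintro S D hD (h | h)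
    · exact ny h
    · exact hyR (hD h)
  exact hno5 (k5_of hxy hcD hcE hcF (dis d12 r1 r2 hDR hER dDE) (dis d13 r1 r3 hDR hFR dDF)
    (dis d23 r2 r3 hER hFR dEF) (nx' hDR) (nx' hER) (nx' hFR) (ny' hDR) (ny' hER) (ny' hFR)
    (up tx1) (up tx2) (up tx3) (up ty1) (up ty2) (up ty3)
    (tD.mono subset_rfl Set.subset_union_left)
    (tF.mono subset_rfl Set.subset_union_left).symm
    (tE.mono subset_rfl Set.subset_union_left))

/-- Balancedness of a vertex set with respect to a `ℤ/2`-labelling of the edges. -/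
def Bal {W : Type*} (G : SimpleGraph W) (φ : W → W → ZMod 2) (C : Set W) : Prop :=
  ∃ s : W → ZMod 2, ∀ a ∈ C, ∀ b ∈ C, G.Adj a b → φ a b = s a + s b

theorem Bal.mono {W : Type*} {G : SimpleGraph W} {φ : W → W → ZMod 2} {C D : Set W}
    (h : Bal G φ D) (hC : C ⊆ D) : Bal G φ C := by
  obtain ⟨s, hs⟩ := h
  exact ⟨s, fun a ha b hb => hs a (hC ha) b (hC hb)⟩

theorem const_of_conn {W : Type*} {G : SimpleGraph W} {φ : W → W → ZMod 2} {D : Set W}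
    (hD : Conn G D) {s t : W → ZMod 2}
    (hs : ∀ a ∈ D, ∀ b ∈ D, G.Adj a b → φ a b = s a + s b)
    (ht : ∀ a ∈ D, ∀ b ∈ D, G.Adj a b → φ a b = t a + t b) :
    ∃ k, ∀ a ∈ D, s a = t a + k := by
  obtain ⟨z, hz⟩ := hD.1
  refine ⟨s z + t z, ?_⟩
  by_contra hcon
  have hne : {a | a ∈ D ∧ s a = t a + (s z + t z)} ≠ D := by
    intro he
    apply hcon
    intro a ha
    rw [← he] at ha
    exact ha.2
  obtain ⟨a, ha, b, hb, hbn, hab⟩ := hD.2 {a | a ∈ D ∧ s a = t a + (s z + t z)} (fun w hw => hw.1) ⟨z, hz, by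
    generalize s z = p, t z = q; decide +revert⟩ hne
  apply hbn
  refine ⟨hb, ?_⟩
  have h1 := hs a ha.1 b hb hab
  have h2 := ht a ha.1 b hb hab
  have h3 := ha.2
  rw [h1] at h2
  generalize s a = p1, s b = p2, t a = p3, t b = p4, s z = p5, t z = p6 at *
  clear hs ht hcon hne h1 ha hbn
  decide +revert

theorem min_cyc {W : Type*} {G : SimpleGraph W} {φ : W → W → ZMod 2}
    (hsym : ∀ a b, φ a b = φ b a) {C : Set W} (hC : ¬ Bal G φ C)
    (hmin : ∀ x ∈ C, Bal G φ (C \ {x})) : Cyc G C := by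
  classical
  constructor
  · by_contra hne
    rw [Set.not_nonempty_iff_eq_empty] at hne
    exact hC ⟨fun _ => 0, fun a ha => by rw [hne] at ha; exact absurd ha (Set.notMem_empty a)⟩
  intro x hx
  obtain ⟨s, hs⟩ := hmin x hx
  let Γ : SimpleGraph W :=
    { Adj := fun a b => G.Adj a b ∧ a ∈ C \ {x} ∧ b ∈ C \ {x}
      symm := ⟨fun a b h => ⟨h.1.symm, h.2.2, h.2.1⟩⟩
      loopless := ⟨fun a h => G.loopless.irrefl a h.1⟩ }
  let Good : W → W → Prop := fun a b => Γ.Reachable a b ∧ a ∈ C ∧ b ∈ C ∧ G.Adj x a ∧ G.Adj x b ∧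
    φ x a + s a ≠ φ x b + s b
  have hex : ∃ d a b, Good a b ∧ Γ.dist a b = d := by
    by_contra hcon
    have hcon' : ∀ a b, ¬ Good a b := fun a b h => hcon ⟨_, a, b, h, rfl⟩
    apply hC
    let κ : W → ZMod 2 := fun w =>
      if ∃ a, Γ.Reachable w a ∧ a ∈ C ∧ G.Adj x a ∧ φ x a + s a = 1 then 1 else 0
    have hκ : ∀ a b, Γ.Adj a b → κ a = κ b := by
      intro a b hab
      have : (∃ c, Γ.Reachable a c ∧ c ∈ C ∧ G.Adj x c ∧ φ x c + s c = 1) ↔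
          (∃ c, Γ.Reachable b c ∧ c ∈ C ∧ G.Adj x c ∧ φ x c + s c = 1) := by
        constructor
        · rintro ⟨c, h, h'⟩; exact ⟨c, hab.symm.reachable.trans h, h'⟩
        · rintro ⟨c, h, h'⟩; exact ⟨c, hab.reachable.trans h, h'⟩
      simp only [κ, this]
    have hκx : ∀ a ∈ C, G.Adj x a → φ x a = s a + κ a := by
      intro a ha hxa
      by_cases h1 : φ x a + s a = 1
      · have : κ a = 1 := if_pos ⟨a, Reachable.refl _, ha, hxa, h1⟩
        rw [this]
        generalize φ x a = p1, s a = p2 at *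
        clear this hs
        decide +revert
      · have : κ a = 0 := by
          apply if_neg
          rintro ⟨b, hr, hb, hxb, h2⟩
          exact hcon' a b ⟨hr, ha, hb, hxa, hxb, by rw [h2]; exact h1⟩
        rw [this]
        generalize φ x a = p1, s a = p2 at *
        clear this hs
        decide +revert
    refine ⟨fun w => if w = x then 0 else s w + κ w, ?_⟩
    intro a ha b hb hab
    by_cases hax : a = x
    · subst hax
      have hbx : b ≠ a := hab.ne.symm
      simp only [if_true, if_neg hbx, zero_add]
      exact hκx b hb hab
    · by_cases hbx : b = x
      · subst hbx
        simp only [if_true, if_neg hax, add_zero]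
        rw [hsym]
        exact hκx a ha hab.symm
      · simp only [if_neg hax, if_neg hbx]
        have h1 := hs a ⟨ha, hax⟩ b ⟨hb, hbx⟩ hab
        have h2 := hκ a b ⟨hab, ⟨ha, hax⟩, ⟨hb, hbx⟩⟩
        rw [h1, h2]
        generalize s a = p1, s b = p2, κ b = p3
        clear h1 h2
        decide +revert
  obtain ⟨a, b, hgood, hd⟩ := Nat.find_spec hex
  have hdmin : ∀ a' b', Good a' b' → Nat.find hex ≤ Γ.dist a' b' := fun a' b' h =>
    Nat.find_min' hex ⟨a', b', h, rfl⟩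
  generalize Nat.find hex = d at hd hdmin
  obtain ⟨hreach, haC, hbC, hxa, hxb, hψ⟩ := hgood
  obtain ⟨p, hp⟩ := hreach.exists_walk_length_eq_dist
  rw [hd] at hp
  have hd0 : 0 < d := by
    rcases Nat.eq_zero_or_pos d with h | h
    · rw [h] at hp
      exact absurd (by rw [Walk.eq_of_length_eq_zero hp]) hψ
    · exact h
  let g : ℕ → W := fun i => p.getVert i
  have g0 : g 0 = a := p.getVert_zero
  have gd : g d = b := by rw [← hp]; exact p.getVert_length
  have gadj : ∀ i, i < d → Γ.Adj (g i) (g (i + 1)) := fun i hi =>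
    p.adj_getVert_succ (by omega)
  have gmem : ∀ i, i ≤ d → g i ∈ C \ {x} := by
    intro i hi
    rcases Nat.lt_or_ge i d with h | h
    · exact (gadj i h).2.1
    · have : i = (d - 1) + 1 := by omega
      rw [this]
      exact (gadj (d - 1) (by omega)).2.2
  have ltk : ∀ i, i ≤ d → (p.take i).length = i := by
    intro i hi; rw [Walk.take_length]; omega
  have ldr : ∀ i, i ≤ d → (p.drop i).length = d - i := by
    intro i hi; rw [Walk.drop_length]; omega
  -- no shortcuts
  have short : ∀ i j, i < j → j ≤ d → ∀ w : Γ.Walk (g i) (g j), j - i ≤ w.length := by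
    intro i j hij hj w
    have h1 := dist_le (((p.take i).append w).append (p.drop j))
    rw [Walk.length_append, Walk.length_append, ltk i (by omega), ldr j hj, hd] at h1
    omega
  have ginj : ∀ i j, i < j → j ≤ d → g i ≠ g j := by
    intro i j hij hj he
    have := short i j hij hj (Walk.nil.copy rfl he)
    rw [Walk.length_copy, Walk.length_nil] at this
    omega
  have gchord : ∀ i j, i < j → j ≤ d → G.Adj (g i) (g j) → j = i + 1 := by
    intro i j hij hj he
    have h : Γ.Adj (g i) (g j) := ⟨he, gmem i (by omega), gmem j hj⟩
    have := short i j hij hj h.toWalk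
    simp only [Adj.toWalk, Walk.length_cons, Walk.length_nil] at this
    omega
  have gx : ∀ i, i ≤ d → G.Adj x (g i) → i = 0 ∨ i = d := by
    intro i hi hxi
    by_contra hcon
    push Not at hcon
    by_cases h : φ x a + s a = φ x (g i) + s (g i)
    · have := hdmin (g i) b ⟨⟨p.drop i⟩, (gmem i hi).1, hbC, hxi, hxb, fun h' => hψ (h.trans h')⟩
      have h2 : Γ.dist (g i) b ≤ (p.drop i).length := dist_le (p.drop i)
      rw [ldr i hi] at h2
      omega
    · have := hdmin a (g i) ⟨⟨p.take i⟩, haC, (gmem i hi).1, hxa, hxi, h⟩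
      have h2 : Γ.dist a (g i) ≤ (p.take i).length := dist_le (p.take i)
      rw [ltk i hi] at h2
      omega
  -- the path together with `x` is unbalanced
  have hU : ∀ w ∈ C, w = x ∨ ∃ i ≤ d, g i = w := by
    intro w hw
    by_contra hcon
    push Not at hcon
    obtain ⟨t, ht⟩ := hmin w hw
    have hgt : ∀ i, i ≤ d → g i ∈ C \ {w} := fun i hi => ⟨(gmem i hi).1, hcon.2 i hi⟩
    have hcst : ∀ i, i ≤ d → s (g i) + t (g i) = s a + t a := by
      intro i
      induction i with
      | zero => intro _; rw [g0]
      | succ i ih =>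
        intro hi
        have e := ih (by omega)
        have e1 := hs _ (gmem i (by omega)) _ (gmem (i + 1) hi) (gadj i (by omega)).1
        have e2 := ht _ (hgt i (by omega)) _ (hgt (i + 1) hi) (gadj i (by omega)).1
        rw [e1] at e2
        rw [← e]
        clear e e1 ih
        generalize s (g i) = p1, s (g (i + 1)) = p2, t (g i) = p3, t (g (i + 1)) = p4 at *
        clear hs ht hψ
        decide +revert
    have e := hcst d le_rfl
    rw [gd] at e
    have hxw : x ∈ C \ {w} := ⟨hx, fun h => hcon.1 h.symm⟩
    have e1 := ht x hxw a (g0 ▸ hgt 0 (by omega)) hxa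
    have e2 := ht x hxw b (gd ▸ hgt d le_rfl) hxb
    apply hψ
    rw [e1, e2]
    clear e1 e2 hcst
    generalize s a = p1, s b = p2, t a = p3, t b = p4, t x = p5 at *
    clear hs ht hψ
    decide +revert
  refine ⟨d + 2, fun i => if i = 0 then x else g (i - 1), ⟨by omega, ?_, ?_, ?_⟩, by simp⟩
  · intro w
    constructor
    · intro hw
      rcases hU w hw with h | ⟨i, hi, h⟩
      · exact ⟨0, by omega, by simp [h]⟩
      · exact ⟨i + 1, by omega, by simpa using h⟩
    · rintro ⟨i, hi, rfl⟩
      by_cases h : i = 0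
      · simpa [h] using hx
      · simp only [if_neg h]
        exact (gmem (i - 1) (by omega)).1
  · intro i hi j hj he
    by_cases h1 : i = 0 <;> by_cases h2 : j = 0
    · omega
    · simp only [if_pos h1, if_neg h2] at he
      exact absurd he.symm (gmem (j - 1) (by omega)).2
    · simp only [if_neg h1, if_pos h2] at he
      exact absurd he (gmem (i - 1) (by omega)).2
    · simp only [if_neg h1, if_neg h2] at he
      rcases Nat.lt_trichotomy i j with h | h | h
      · exact absurd he (ginj _ _ (by omega) (by omega))
      · exact h
      · exact absurd he.symm (ginj _ _ (by omega) (by omega))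
  · intro i j hij hj
    have h2 : j ≠ 0 := by omega
    by_cases h1 : i = 0
    · simp only [if_pos h1, if_neg h2]
      constructor
      · intro h
        have := gx (j - 1) (by omega) h
        omega
      · intro h
        rcases h with h | h
        · have : j - 1 = 0 := by omega
          rw [this, g0]; exact hxa
        · have : j - 1 = d := by omega
          rw [this, gd]; exact hxb
    · simp only [if_neg h1, if_neg h2]
      constructor
      · intro h
        have := gchord (i - 1) (j - 1) (by omega) (by omega) h
        omega
      · intro h
        have h' : j - 1 = (i - 1) + 1 := by omega
        rw [h']
        exact (gadj (i - 1) (by omega)).1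

theorem z2aux : ∀ p q k : ZMod 2, p + q = (p + k) + (q + k) := by decide

/-- Splitting an unbalanced cycle along a connected set. -/
theorem ear {W : Type*} {G : SimpleGraph W} {φ : W → W → ZMod 2} (hsym : ∀ a b, φ a b = φ b a)
    {C D : Set W} {n : ℕ} {c : ℕ → W}
    (hP : Par G C n c) (hC : ¬ Bal G φ C) (hD : Conn G D) {i m : ℕ}
    (him : i < m) (hm : m < n)
    (ti : ∃ d ∈ D, G.Adj (c i) d) (tm : ∃ d ∈ D, G.Adj (c m) d) :
    ¬ Bal G φ ({w | ∃ l < n, (l ≤ i ∨ m ≤ l) ∧ c l = w} ∪ D) ∨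
    ¬ Bal G φ ({w | ∃ l < n, (i ≤ l ∧ l ≤ m) ∧ c l = w} ∪ D) := by
  classical
  by_contra hcon
  push Not at hcon
  obtain ⟨⟨s, hs⟩, ⟨t, ht⟩⟩ := hcon
  have hD' : Conn G (insert (c m) (insert (c i) D)) := by
    obtain ⟨d, hd, h⟩ := ti
    obtain ⟨d', hd', h'⟩ := tm
    exact conn_insert (conn_insert hD hd h.symm) (Or.inr hd') h'.symm
  have sub1 : insert (c m) (insert (c i) D) ⊆ {w | ∃ l < n, (l ≤ i ∨ m ≤ l) ∧ c l = w} ∪ D := by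
    rintro w (rfl | rfl | h)
    · left; exact ⟨m, hm, Or.inr le_rfl, rfl⟩
    · left; exact ⟨i, by omega, Or.inl le_rfl, rfl⟩
    · exact Or.inr h
  have sub2 : insert (c m) (insert (c i) D) ⊆ {w | ∃ l < n, (i ≤ l ∧ l ≤ m) ∧ c l = w} ∪ D := by
    rintro w (rfl | rfl | h)
    · left; exact ⟨m, hm, by omega, rfl⟩
    · left; exact ⟨i, by omega, by omega, rfl⟩
    · exact Or.inr h
  obtain ⟨k, hk⟩ := const_of_conn hD' (fun a ha b hb => hs a (sub1 ha) b (sub1 hb))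
    (fun a ha b hb => ht a (sub2 ha) b (sub2 hb))
  have ki : s (c i) = t (c i) + k := hk _ (Or.inr (Or.inl rfl))
  have km : s (c m) = t (c m) + k := hk _ (Or.inl rfl)
  apply hC
  let u : W → ZMod 2 := fun w => if ∃ l < n, (l ≤ i ∨ m ≤ l) ∧ c l = w then s w else t w + k
  have u1 : ∀ l < n, (l ≤ i ∨ m ≤ l) → u (c l) = s (c l) := fun l h1 h2 =>
    if_pos ⟨l, h1, h2, rfl⟩
  have u2 : ∀ l < n, (i ≤ l ∧ l ≤ m) → u (c l) = t (c l) + k := by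
    intro l h1 h2
    by_cases h : ∃ l' < n, (l' ≤ i ∨ m ≤ l') ∧ c l' = c l
    · have e : u (c l) = s (c l) := if_pos h
      obtain ⟨l', a1, a2, a3⟩ := h
      have := hP.inj _ a1 _ h1 a3
      subst this
      have : l' = i ∨ l' = m := by omega
      rcases this with rfl | rfl
      · rw [e, ki]
      · rw [e, km]
    · exact if_neg h
  have main : ∀ l l', l < l' → l' < n → G.Adj (c l) (c l') →
      φ (c l) (c l') = u (c l) + u (c l') := by
    intro l l' hll hl' hadj
    have hor := (hP.adj l l' hll hl').1 hadj
    by_cases h1 : (l ≤ i ∨ m ≤ l) ∧ (l' ≤ i ∨ m ≤ l')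
    · rw [u1 l (by omega) h1.1, u1 l' hl' h1.2]
      exact hs _ (Or.inl ⟨l, by omega, h1.1, rfl⟩) _ (Or.inl ⟨l', hl', h1.2, rfl⟩) hadj
    · have h2 : (i ≤ l ∧ l ≤ m) ∧ (i ≤ l' ∧ l' ≤ m) := by omega
      rw [u2 l (by omega) h2.1, u2 l' hl' h2.2,
        ht _ (Or.inl ⟨l, by omega, h2.1, rfl⟩) _ (Or.inl ⟨l', hl', h2.2, rfl⟩) hadj]
      exact z2aux _ _ _
  refine ⟨u, ?_⟩
  intro a ha b hb hab
  obtain ⟨l, hl, rfl⟩ := (hP.mem a).1 ha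
  obtain ⟨l', hl', rfl⟩ := (hP.mem b).1 hb
  rcases Nat.lt_trichotomy l l' with h | h | h
  · exact main l l' h hl' hab
  · subst h; exact absurd hab (G.loopless.irrefl _)
  · rw [hsym, main l' l h hl hab.symm, add_comm]

theorem ncard_pair_le' {W : Type*} (a b : W) : ({a, b} : Set W).ncard ≤ 2 := by
  have := Set.ncard_insert_le a {b}
  rw [Set.ncard_singleton] at this
  omega

theorem miss {W : Type*} {G : SimpleGraph W} {φ : W → W → ZMod 2} {B X C D : Set W} {n : ℕ}
    {c : ℕ → W} (hP : Par G C n c) (hCB : C ⊆ Bᶜ) (hU : ∀ U ⊆ Bᶜ, ¬ Bal G φ U → X ⊆ U)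
    (hD : D ⊆ Bᶜ \ C) (P : ℕ → Prop) (q : ℕ) (hq : q < n) (hqX : c q ∈ X) (hPq : ¬ P q) :
    Bal G φ ({w | ∃ l < n, P l ∧ c l = w} ∪ D) := by
  by_contra hcon
  have := hU _ (by
    rintro w (⟨l, hl, -, rfl⟩ | h)
    · exact hCB ((hP.mem _).2 ⟨l, hl, rfl⟩)
    · exact (hD h).1) hcon hqX
  rcases this with ⟨l, hl, hPl, he⟩ | h
  · rw [hP.inj l hl q hq he] at hPl
    exact hPq hPl
  · exact (hD h).2 ((hP.mem _).2 ⟨q, hq, rfl⟩)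

theorem stepA {W : Type*} [Finite W] {G : SimpleGraph W} {φ : W → W → ZMod 2}
    (hsym : ∀ a b, φ a b = φ b a)
    (h4 : ∀ S : Set W, S.ncard < 4 → Conn G Sᶜ) {B X C : Set W} (hB : Conn G B)
    (hX : ∀ x, x ∈ X ↔ x ∉ B ∧ ∃ b ∈ B, G.Adj b x)
    (hU : ∀ U ⊆ Bᶜ, ¬ Bal G φ U → X ⊆ U) (hCB : C ⊆ Bᶜ) (hC : ¬ Bal G φ C) (hcyc : Cyc G C) :
    C ⊆ X := by
  classical
  intro c0 hc0
  by_contra hc0X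
  have hXC : X ⊆ C := hU C hCB hC
  have hcard : ¬ X.ncard < 4 := by
    intro h
    obtain ⟨a, ha, b, hb, hbB, hab⟩ := (h4 X h).2 B (fun b hb hbX => ((hX b).1 hbX).1 hb) hB.1
      (fun he => hCB hc0 (he ▸ hc0X))
    exact hb ((hX b).2 ⟨hbB, a, ha, hab⟩)
  obtain ⟨n, c, hP, hc0e⟩ := hcyc.2 c0 hc0
  have h3 := hP.three
  have hexj : ∃ j, j < n ∧ c j ∈ X := by
    by_contra hcon
    apply hcard
    have : X = ∅ := by
      rw [Set.eq_empty_iff_forall_notMem]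
      intro x hx
      obtain ⟨i, hi, rfl⟩ := (hP.mem x).1 (hXC hx)
      exact hcon ⟨i, hi, hx⟩
    rw [this]; simp
  obtain ⟨j, ⟨hj, hjX⟩, hjmin⟩ : ∃ j, (j < n ∧ c j ∈ X) ∧ ∀ l < n, c l ∈ X → j ≤ l :=
    ⟨Nat.find hexj, Nat.find_spec hexj, fun l hl hlX => Nat.find_min' hexj ⟨hl, hlX⟩⟩
  obtain ⟨k, ⟨hk, hkX⟩, hkmax⟩ : ∃ k, (k < n ∧ c k ∈ X) ∧ ∀ l < n, c l ∈ X → l ≤ k :=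
    ⟨Nat.findGreatest (fun l => l < n ∧ c l ∈ X) n,
      Nat.findGreatest_spec (P := fun l => l < n ∧ c l ∈ X) hj.le ⟨hj, hjX⟩,
      fun l hl hlX => Nat.le_findGreatest (P := fun l => l < n ∧ c l ∈ X) hl.le ⟨hl, hlX⟩⟩
  have hjk : j < k := by
    rcases Nat.lt_or_ge j k with h | h
    · exact h
    · exfalso
      apply hcard
      have hs : X ⊆ {c j} := by
        intro x hx
        obtain ⟨i, hi, rfl⟩ := (hP.mem x).1 (hXC hx)
        have h1 := hjmin i hi hx
        have h2 := hkmax i hi hx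
        have : i = j := by omega
        rw [this]; rfl
      have := Set.ncard_le_ncard hs
      rw [Set.ncard_singleton] at this
      omega
  have hj1 : 1 ≤ j := by
    rcases Nat.eq_zero_or_pos j with h | h
    · rw [h, hc0e] at hjX
      exact absurd hjX hc0X
    · exact h
  have hconn : Conn G ({c j, c k} : Set W)ᶜ := h4 _ (by
    have := ncard_pair_le' (c j) (c k)
    omega)
  let W0 : Set W := {w | (∃ l < n, (l < j ∨ k < l) ∧ c l = w) ∨
    ∃ D ⊆ Bᶜ \ C, Conn G D ∧ w ∈ D ∧ ∃ d ∈ D, ∃ l < n, (l < j ∨ k < l) ∧ G.Adj (c l) d}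
  obtain ⟨b0, hb0⟩ := hB.1
  have hjC : c j ∈ C := hXC hjX
  have hkC : c k ∈ C := hXC hkX
  obtain ⟨a, ha, y, hy, hyW, hay⟩ := hconn.2 W0 (by
      rintro w (⟨l, hl, hor, rfl⟩ | ⟨D, hD, -, hw, -⟩)
      · rintro (h | h)
        · have := hP.inj l hl j hj h; omega
        · have := hP.inj l hl k hk h; omega
      · rintro (h | h)
        · exact (hD hw).2 (h ▸ hjC)
        · exact (hD hw).2 (h ▸ hkC))
    ⟨c 0, Or.inl ⟨0, by omega, by omega, rfl⟩⟩ (by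
      intro he
      have : b0 ∈ W0 := by
        rw [he]
        rintro (h | h)
        · exact hCB hjC (h ▸ hb0)
        · exact hCB hkC (h ▸ hb0)
      rcases this with ⟨l, hl, hor, rfl⟩ | ⟨D, hD, -, hw, -⟩
      · exact hCB ((hP.mem _).2 ⟨l, hl, rfl⟩) hb0
      · exact (hD hw).1 hb0)
  by_cases hyB : y ∈ B
  · rcases ha with ⟨l, hl, hor, rfl⟩ | ⟨D, hD, -, hw, -⟩
    · have hx : c l ∈ X := (hX _).2 ⟨hCB ((hP.mem _).2 ⟨l, hl, rfl⟩), y, hyB, hay.symm⟩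
      have h1 := hjmin l hl hx
      have h2 := hkmax l hl hx
      omega
    · exact (hD hw).2 (hXC ((hX _).2 ⟨(hD hw).1, y, hyB, hay.symm⟩))
  by_cases hyC : y ∈ C
  · obtain ⟨m, hm, rfl⟩ := (hP.mem y).1 hyC
    have hmj : m ≠ j := by rintro rfl; exact hy (Or.inl rfl)
    have hmk : m ≠ k := by rintro rfl; exact hy (Or.inr rfl)
    have hm1 : ¬ (m < j ∨ k < m) := fun h => hyW (Or.inl ⟨m, hm, h, rfl⟩)
    rcases ha with ⟨l, hl, hor, rfl⟩ | ⟨D, hD, hDc, hw, d, hd, l, hl, hor, hld⟩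
    · rcases hor with h | h
      · have := (hP.adj l m (by omega) hm).1 hay
        omega
      · have := (hP.adj m l (by omega) hl).1 hay.symm
        omega
    · rcases hor with h | h
      · rcases ear hsym hP hC hDc (i := l) (m := m) (by omega) hm ⟨d, hd, hld⟩ ⟨a, hw, hay.symm⟩
          with h1 | h1
        · exact h1 (miss hP hCB hU hD (fun q => q ≤ l ∨ m ≤ q) j hj hjX (by omega))
        · exact h1 (miss hP hCB hU hD (fun q => l ≤ q ∧ q ≤ m) k hk hkX (by omega))
      · rcases ear hsym hP hC hDc (i := m) (m := l) (by omega) hl ⟨a, hw, hay.symm⟩ ⟨d, hd, hld⟩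
          with h1 | h1
        · exact h1 (miss hP hCB hU hD (fun q => q ≤ m ∨ l ≤ q) k hk hkX (by omega))
        · exact h1 (miss hP hCB hU hD (fun q => m ≤ q ∧ q ≤ l) j hj hjX (by omega))
  · rcases ha with ⟨l, hl, hor, rfl⟩ | ⟨D, hD, hDc, hw, d, hd, l, hl, hor, hld⟩
    · exact hyW (Or.inr ⟨{y}, by rintro w rfl; exact ⟨hyB, hyC⟩, conn_singleton y, rfl, y, rfl,
        l, hl, hor, hay⟩)
    · exact hyW (Or.inr ⟨insert y D, by
        rintro w (rfl | h)
        · exact ⟨hyB, hyC⟩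
        · exact hD h, conn_insert hDc hw hay, Or.inl rfl, d, Or.inr hd, l, hl, hor, hld⟩)

theorem stepB {W : Type*} [Finite W] {G : SimpleGraph W} {φ : W → W → ZMod 2}
    (hsym : ∀ a b, φ a b = φ b a)
    (h4 : ∀ S : Set W, S.ncard < 4 → Conn G Sᶜ) {B X C : Set W} (hB : Conn G B)
    (hX : ∀ x, x ∈ X ↔ x ∉ B ∧ ∃ b ∈ B, G.Adj b x)
    (hU : ∀ U ⊆ Bᶜ, ¬ Bal G φ U → X ⊆ U) (hCB : C ⊆ Bᶜ) (hC : ¬ Bal G φ C) (hcyc : Cyc G C)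
    (hCX : C ⊆ X) : Bᶜ ⊆ C := by
  intro d0 hd0
  by_contra hd0C
  have hXC : X ⊆ C := hU C hCB hC
  obtain ⟨D, hd0D, hD, hDc, hDm⟩ := exists_comp (R := Bᶜ \ C) (conn_singleton (G := G) d0)
    (by rintro w rfl; exact ⟨hd0, hd0C⟩)
  let A : Set W := {a | a ∈ C ∧ ∃ d ∈ D, G.Adj a d}
  obtain ⟨b0, hb0⟩ := hB.1
  have hA : ¬ A.ncard < 4 := by
    intro h
    obtain ⟨a, ha, y, hy, hyD, hay⟩ := (h4 A h).2 D (fun w hw hwA => (hD hw).2 hwA.1) hDc.1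
      (fun he => by
        have : b0 ∈ D := by rw [he]; exact fun h => hCB h.1 hb0
        exact (hD this).1 hb0)
    by_cases hyB : y ∈ B
    · exact (hD ha).2 (hXC ((hX a).2 ⟨(hD ha).1, y, hyB, hay.symm⟩))
    by_cases hyC : y ∈ C
    · exact hy ⟨hyC, a, ha, hay.symm⟩
    · exact hDm a ha y ⟨hyB, hyC⟩ hyD hay
  obtain ⟨a, ha⟩ : A.Nonempty := by
    rw [Set.nonempty_iff_ne_empty]
    intro h
    rw [h] at hA
    simp at hA
  obtain ⟨n, c, hP, hc0⟩ := hcyc.2 a ha.1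
  have h3 := hP.three
  have : ¬ A ⊆ {c 0, c 1, c (n - 1)} := by
    intro h
    have h1 := Set.ncard_le_ncard h
    have h2 : ({c 0, c 1, c (n - 1)} : Set W).ncard ≤ 3 := by
      have e1 := Set.ncard_insert_le (c 0) {c 1, c (n - 1)}
      have e2 := ncard_pair_le' (c 1) (c (n - 1))
      omega
    omega
  rw [Set.not_subset] at this
  obtain ⟨x, hxA, hx⟩ := this
  obtain ⟨m, hm, rfl⟩ := (hP.mem x).1 hxA.1
  have m0 : m ≠ 0 := by rintro rfl; exact hx (Or.inl rfl)
  have m1 : m ≠ 1 := by rintro rfl; exact hx (Or.inr (Or.inl rfl))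
  have m2 : m ≠ n - 1 := by rintro rfl; exact hx (Or.inr (Or.inr rfl))
  have memC : ∀ l < n, c l ∈ X := fun l hl => hCX ((hP.mem _).2 ⟨l, hl, rfl⟩)
  rcases ear hsym hP hC hDc (i := 0) (m := m) (by omega) hm (hc0 ▸ ha.2) hxA.2 with h1 | h1
  · exact h1 (miss hP hCB hU hD (fun q => q ≤ 0 ∨ m ≤ q) 1 (by omega) (memC _ (by omega))
      (by omega))
  · exact h1 (miss hP hCB hU hD (fun q => 0 ≤ q ∧ q ≤ m) (n - 1) (by omega) (memC _ (by omega))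
      (by omega))

/-- Peripheral cycles generate the cycle space (cohomological form). -/
theorem bal_univ {W : Type*} [Finite W] {G : SimpleGraph W} {φ : W → W → ZMod 2}
    (hsym : ∀ a b, φ a b = φ b a)
    (h4 : ∀ S : Set W, S.ncard < 4 → Conn G Sᶜ) (h3 : Deg3 G)
    (hper : ∀ C, Peri G C → Bal G φ C) : Bal G φ Set.univ := by
  by_contra hun
  obtain ⟨B, -, hBmax⟩ := (Set.toFinite {B : Set W | (B = ∅ ∨ Conn G B) ∧ ¬ Bal G φ Bᶜ}).exists_le_maximal
    (a := ∅) ⟨Or.inl rfl, by rwa [Set.compl_empty]⟩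
  have hU : ∀ U ⊆ Bᶜ, ¬ Bal G φ U → {x | x ∉ B ∧ (B = ∅ ∨ ∃ b ∈ B, G.Adj b x)} ⊆ U := by
    rintro U hUB hUn x ⟨hxB, hx⟩
    by_contra hxU
    have hB' : Conn G (insert x B) := by
      rcases hx with rfl | ⟨b, hb, h⟩
      · rw [insert_empty_eq]; exact conn_singleton x
      · rcases hBmax.prop.1 with h' | h'
        · rw [h'] at hb; exact absurd hb (Set.notMem_empty _)
        · exact conn_insert h' hb h
    have := hBmax.le_of_ge (y := insert x B) ⟨Or.inr hB', fun h => hUn (h.mono (by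
      rintro w hw (rfl | h)
      · exact hxU hw
      · exact hUB hw h))⟩ (Set.subset_insert x B)
    exact hxB (this (Set.mem_insert x B))
  obtain ⟨C, -, hCmin⟩ := (Set.toFinite {U : Set W | U ⊆ Bᶜ ∧ ¬ Bal G φ U}).exists_le_minimal
    (a := Bᶜ) ⟨subset_rfl, hBmax.prop.2⟩
  have hCB : C ⊆ Bᶜ := hCmin.prop.1
  have hC : ¬ Bal G φ C := hCmin.prop.2
  have hcyc : Cyc G C := by
    apply min_cyc hsym hC
    intro x hx
    by_contra hcon
    have := hCmin.le_of_le (y := C \ {x}) ⟨Set.sdiff_subset.trans hCB, hcon⟩ Set.sdiff_subset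
    exact (this hx).2 rfl
  rcases hBmax.prop.1 with hB | hB
  · have hall : ∀ w, w ∈ C := fun w => hU C hCB hC ⟨by rw [hB]; exact Set.notMem_empty _, Or.inl hB⟩
    obtain ⟨x, hx⟩ := hcyc.1
    obtain ⟨a, b, -, -, -, h⟩ := hcyc.two hx
    obtain ⟨y, hy, hya, hyb⟩ := h3 x a b
    rcases (h y (hall y)).1 hy with h | h
    · exact hya h
    · exact hyb h
  · have hU' : ∀ U ⊆ Bᶜ, ¬ Bal G φ U → {x | x ∉ B ∧ ∃ b ∈ B, G.Adj b x} ⊆ U :=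
      fun U h1 h2 x hx => hU U h1 h2 ⟨hx.1, Or.inr hx.2⟩
    have h1 := stepA hsym h4 hB (fun x => Iff.rfl) hU' hCB hC hcyc
    have h2 := stepB hsym h4 hB (fun x => Iff.rfl) hU' hCB hC hcyc h1
    have : Cᶜ = B := by rw [hCB.antisymm h2, compl_compl]
    exact hC (hper C ⟨hcyc, this ▸ hB⟩)

open Classical in
/-- The symmetric function of two vertices attached to an edge labelling. -/
noncomputable def ofEdge {W : Type*} (G : SimpleGraph W) (f : G.edgeSet → ZMod 2) (a b : W) :
    ZMod 2 := if h : G.Adj a b then f ⟨s(a, b), h⟩ else 0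

theorem ofEdge_symm {W : Type*} (G : SimpleGraph W) (f : G.edgeSet → ZMod 2) (a b : W) :
    ofEdge G f a b = ofEdge G f b a := by
  unfold ofEdge
  by_cases h : G.Adj a b
  · rw [dif_pos h, dif_pos h.symm]
    congr 2
    exact Sym2.eq_swap
  · rw [dif_neg h, dif_neg (fun h' => h h'.symm)]

theorem ofEdge_add {W : Type*} (G : SimpleGraph W) (f g : G.edgeSet → ZMod 2) (a b : W) :
    ofEdge G (f + g) a b = ofEdge G f a b + ofEdge G g a b := by
  unfold ofEdge
  split_ifs <;> simp

theorem ofEdge_smul {W : Type*} (G : SimpleGraph W) (r : ZMod 2) (f : G.edgeSet → ZMod 2)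
    (a b : W) : ofEdge G (r • f) a b = r * ofEdge G f a b := by
  unfold ofEdge
  split_ifs <;> simp

/-- The sum of an edge labelling around a cyclic sequence. -/
noncomputable def cycSum {W : Type*} (G : SimpleGraph W) (n : ℕ) (c : ℕ → W) :
    (G.edgeSet → ZMod 2) →ₗ[ZMod 2] ZMod 2 where
  toFun f := (∑ j ∈ Finset.range (n - 1), ofEdge G f (c j) (c (j + 1))) +
    ofEdge G f (c (n - 1)) (c 0)
  map_add' f g := by
    simp only [ofEdge_add, Finset.sum_add_distrib]
    ring
  map_smul' r f := by
    simp only [ofEdge_smul, ← Finset.mul_sum, RingHom.id_apply, smul_eq_mul]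
    ring

theorem z2b : ∀ p q : ZMod 2, q = p + (p + q) := by decide
theorem z2c : ∀ p q : ZMod 2, p + q = 0 → q = 0 + p := by decide

theorem bal_of_cycSum {W : Type*} {G : SimpleGraph W} {C : Set W} {n : ℕ} {c : ℕ → W}
    (hP : Par G C n c) (f : G.edgeSet → ZMod 2) (h : cycSum G n c f = 0) :
    Bal G (ofEdge G f) C := by
  classical
  have h3 := hP.three
  let S : ℕ → ZMod 2 := fun i => ∑ j ∈ Finset.range i, ofEdge G f (c j) (c (j + 1))
  let s : W → ZMod 2 := fun w => if hw : ∃ i < n, c i = w then S hw.choose else 0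
  have hs : ∀ i < n, s (c i) = S i := by
    intro i hi
    have hw : ∃ k < n, c k = c i := ⟨i, hi, rfl⟩
    have : s (c i) = S hw.choose := dif_pos hw
    rw [this, hP.inj _ hw.choose_spec.1 _ hi hw.choose_spec.2]
  have main : ∀ l l', l < l' → l' < n → G.Adj (c l) (c l') →
      ofEdge G f (c l) (c l') = s (c l) + s (c l') := by
    intro l l' hll hl' hadj
    rw [hs l (by omega), hs l' hl']
    rcases (hP.adj l l' hll hl').1 hadj with rfl | ⟨rfl, hn⟩
    · have : S (l + 1) = S l + ofEdge G f (c l) (c (l + 1)) := Finset.sum_range_succ _ _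
      rw [this]
      exact z2b _ _
    · have e : l' = n - 1 := by omega
      subst e
      have : S 0 = 0 := Finset.sum_range_zero _
      rw [this, ofEdge_symm]
      exact z2c _ _ h
  refine ⟨s, ?_⟩
  intro a ha b hb hab
  obtain ⟨l, hl, rfl⟩ := (hP.mem a).1 ha
  obtain ⟨l', hl', rfl⟩ := (hP.mem b).1 hb
  rcases Nat.lt_trichotomy l l' with h | h | h
  · exact main l l' h hl' hab
  · subst h; exact absurd hab (G.loopless.irrefl _)
  · rw [ofEdge_symm, main l' l h hl hab.symm, add_comm]

/-- The coboundary map. -/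
noncomputable def cobd {W : Type*} (G : SimpleGraph W) :
    (W → ZMod 2) →ₗ[ZMod 2] (G.edgeSet → ZMod 2) where
  toFun s e := Sym2.lift ⟨fun a b => s a + s b, fun a b => add_comm _ _⟩ e.1
  map_add' s t := by
    funext ⟨e, he⟩
    induction e using Sym2.ind with
    | _ a b => simp only [Sym2.lift_mk, Pi.add_apply]; ring
  map_smul' r s := by
    funext ⟨e, he⟩
    induction e using Sym2.ind with
    | _ a b => simp only [Sym2.lift_mk, Pi.smul_apply, smul_eq_mul, RingHom.id_apply]; ring

theorem edge_bound {W : Type*} [Finite W] {G : SimpleGraph W}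
    (h4 : ∀ S : Set W, S.ncard < 4 → Conn G Sᶜ) (h3 : Deg3 G) :
    Nat.card G.edgeSet ≤ Nat.card {S : Set W // Peri G S} + Nat.card W := by
  classical
  have hpar : ∀ S : {S : Set W // Peri G S}, ∃ n c, Par G S.1 n c := by
    rintro ⟨S, hS⟩
    obtain ⟨x, hx⟩ := hS.1.1
    obtain ⟨n, c, h, -⟩ := hS.1.2 x hx
    exact ⟨n, c, h⟩
  choose n c hP using hpar
  have := Fintype.ofFinite W
  have := Fintype.ofFinite G.edgeSet
  have := Fintype.ofFinite {S : Set W // Peri G S}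
  let Φ : (G.edgeSet → ZMod 2) →ₗ[ZMod 2] ({S : Set W // Peri G S} → ZMod 2) :=
    LinearMap.pi (fun S => cycSum G (n S) (c S))
  have hker : LinearMap.ker Φ ≤ LinearMap.range (cobd G) := by
    intro f hf
    have hf' : Φ f = 0 := hf
    obtain ⟨s, hs⟩ := bal_univ (φ := ofEdge G f) (ofEdge_symm G f) h4 h3 (fun C hC =>
      bal_of_cycSum (hP ⟨C, hC⟩) f (congrFun hf' ⟨C, hC⟩))
    refine ⟨s, ?_⟩
    funext ⟨e, he⟩
    induction e using Sym2.ind with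
    | _ a b =>
      have hab : G.Adj a b := he
      have := hs a trivial b trivial hab
      rw [ofEdge, dif_pos hab] at this
      exact this.symm
  have r1 := LinearMap.finrank_range_add_finrank_ker Φ
  have r2 := Submodule.finrank_mono hker
  have r3 := LinearMap.finrank_range_le (cobd G)
  have r4 := Submodule.finrank_le (LinearMap.range Φ)
  rw [Module.finrank_fintype_fun_eq_card] at r1 r3 r4
  rw [Nat.card_eq_fintype_card, Nat.card_eq_fintype_card, Nat.card_eq_fintype_card]
  omega

theorem Par.ncard {W : Type*} {G : SimpleGraph W} {S : Set W} {n : ℕ} {c : ℕ → W}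
    (hP : Par G S n c) : S.ncard = n := by
  classical
  have : S = ((Finset.range n).image c : Finset W) := by
    ext w
    rw [hP.mem]
    simp
  rw [this, Set.ncard_coe_finset, Finset.card_image_of_injOn, Finset.card_range]
  intro i hi j hj he
  simp only [Finset.coe_range, Set.mem_Iio] at hi hj
  exact hP.inj i hi j hj he

theorem Cyc.three {W : Type*} {G : SimpleGraph W} {S : Set W} (h : Cyc G S) : 3 ≤ S.ncard := by
  obtain ⟨x, hx⟩ := h.1
  obtain ⟨n, c, hP, -⟩ := h.2 x hx
  rw [hP.ncard]
  exact hP.three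

theorem Cyc.tri {W : Type*} {G : SimpleGraph W} {S : Set W} (h : Cyc G S) (h3 : S.ncard = 3)
    {u w : W} (hu : u ∈ S) (hw : w ∈ S) (huw : u ≠ w) : G.Adj u w := by
  obtain ⟨n, c, hP, rfl⟩ := h.2 u hu
  rw [hP.ncard] at h3
  obtain ⟨m, hm, rfl⟩ := (hP.mem w).1 hw
  have hm0 : m ≠ 0 := by rintro rfl; exact huw rfl
  exact (hP.adj 0 m (by omega) hm).2 (by omega)

open Classical in
theorem Cyc.count {W : Type*} [Fintype W] {G : SimpleGraph W} {S : Set W} (h : Cyc G S) :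
    2 * S.ncard ≤ (Finset.univ.filter (fun p : W × W => G.Adj p.1 p.2 ∧
      (p.1 ∈ S ∧ p.2 ∈ S))).card := by
  rw [Finset.card_eq_sum_card_fiberwise (f := Prod.fst) (t := S.toFinset) (by
    intro p hp
    simp only [Finset.coe_filter, Set.mem_ofPred_eq] at hp
    simpa using hp.2.2.1)]
  rw [Set.ncard_eq_toFinset_card', mul_comm, ← smul_eq_mul]
  apply Finset.card_nsmul_le_sum
  intro x hx
  have hx : x ∈ S := by simpa using hx
  obtain ⟨a, b, hab, ha, hb, hn⟩ := h.two hx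
  have : ({(x, a), (x, b)} : Finset (W × W)).card = 2 :=
    Finset.card_pair (fun he => hab (Prod.mk.inj he).2)
  rw [← this]
  apply Finset.card_le_card
  intro p hp
  rw [Finset.mem_insert, Finset.mem_singleton] at hp
  rw [Finset.mem_filter, Finset.mem_filter]
  rcases hp with rfl | rfl
  · exact ⟨⟨Finset.mem_univ _, (hn a ha).2 (Or.inl rfl), hx, ha⟩, rfl⟩
  · exact ⟨⟨Finset.mem_univ _, (hn b hb).2 (Or.inr rfl), hx, hb⟩, rfl⟩

theorem key {W : Type*} [Fintype W] [Nonempty W] {G : SimpleGraph W}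
    (h4 : ∀ S : Set W, S.ncard < 4 → Conn G Sᶜ)
    (hdeg : ∀ x, 5 ≤ {y | G.Adj x y}.ncard)
    (hno : ¬ HasMinor G (completeBipartiteGraph (Fin 3) (Fin 3)))
    (hno5 : ¬ HasMinor G (completeGraph (Fin 5)))
    (hk : ¬ containsK4minus G) : False := by
  classical
  have h3 : Deg3 G := by
    intro x a b
    by_contra hcon
    have hs : {y | G.Adj x y} ⊆ {a, b} := by
      intro y hy
      by_contra hn
      exact hcon ⟨y, hy, fun h => hn (Or.inl h), fun h => hn (Or.inr h)⟩
    have := Set.ncard_le_ncard hs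
    have := ncard_pair_le' a b
    have := hdeg x
    omega
  have hE := edge_bound h4 h3
  let P : Finset (W × W) := Finset.univ.filter (fun p => G.Adj p.1 p.2)
  let F : Finset (Set W) := Finset.univ.filter (fun S => Peri G S)
  let T : Finset (Set W) := F.filter (fun S => S.ncard = 3)
  have hF : Nat.card {S : Set W // Peri G S} = F.card := by
    rw [Nat.card_eq_fintype_card, Fintype.card_subtype]
  have hEe : Nat.card G.edgeSet = G.edgeFinset.card := by
    rw [Nat.card_eq_fintype_card, ← SimpleGraph.edgeFinset_card]
  have hfib : P.card = ∑ x, G.degree x := by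
    rw [Finset.card_eq_sum_card_fiberwise (f := Prod.fst) (t := Finset.univ)
      (fun _ _ => by simp)]
    apply Finset.sum_congr rfl
    intro x _
    rw [← SimpleGraph.card_neighborFinset_eq_degree]
    symm
    apply Finset.card_bij (fun y _ => (x, y))
    · intro y hy
      rw [SimpleGraph.mem_neighborFinset] at hy
      rw [Finset.mem_filter, Finset.mem_filter]
      exact ⟨⟨Finset.mem_univ _, hy⟩, rfl⟩
    · intro y _ z _ he
      exact (Prod.mk.inj he).2
    · rintro ⟨a, b⟩ hp
      rw [Finset.mem_filter, Finset.mem_filter] at hp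
      obtain ⟨⟨-, h1⟩, rfl⟩ := hp
      exact ⟨b, by rw [SimpleGraph.mem_neighborFinset]; exact h1, rfl⟩
  have hP2 : P.card = 2 * G.edgeFinset.card := by
    rw [hfib, SimpleGraph.sum_degrees_eq_twice_card_edges]
  have hP5 : Fintype.card W * 5 ≤ P.card := by
    rw [hfib, ← smul_eq_mul, ← Finset.card_univ]
    apply Finset.card_nsmul_le_sum
    intro x _
    rw [← SimpleGraph.card_neighborFinset_eq_degree]
    have := hdeg x
    have e : {y | G.Adj x y} = ((G.neighborFinset x : Finset W) : Set W) := by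
      ext y
      rw [Finset.mem_coe, SimpleGraph.mem_neighborFinset]
      exact Iff.rfl
    rwa [e, Set.ncard_coe_finset] at this
  let r : W × W → Set W → Prop := fun p S => p.1 ∈ S ∧ p.2 ∈ S
  have hcnt : ∀ S ∈ F, 2 * S.ncard ≤ (P.bipartiteBelow r S).card := by
    intro S hS
    have h := (Finset.mem_filter.1 hS).2.1.count
    refine h.trans (Finset.card_le_card ?_)
    intro p hp
    rw [Finset.mem_filter] at hp
    rw [Finset.mem_bipartiteBelow, Finset.mem_filter]
    exact ⟨⟨hp.1, hp.2.1⟩, hp.2.2⟩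
  have hTF : T ⊆ F := Finset.filter_subset _ _
  -- every dart lies in at most two peripheral cycles
  have hle2 : ∀ p ∈ P, (F.bipartiteAbove r p).card ≤ 2 := by
    intro p hp
    by_contra hcon
    push Not at hcon
    obtain ⟨a, b, c, ha, hb, hc, hab, hac, hbc⟩ := Finset.two_lt_card_iff.1 hcon
    rw [Finset.mem_bipartiteAbove] at ha hb hc
    exact peri_three h3 hno hno5 (Finset.mem_filter.1 ha.1).2 (Finset.mem_filter.1 hb.1).2
      (Finset.mem_filter.1 hc.1).2 hab hac hbc (Finset.mem_filter.1 hp).2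
      ha.2.1 ha.2.2 hb.2.1 hb.2.2 hc.2.1 hc.2.2
  -- and in at most one triangle
  have hle1 : ∀ p ∈ P, (T.bipartiteAbove r p).card ≤ 1 := by
    intro p hp
    by_contra hcon
    push Not at hcon
    obtain ⟨a, b, ha, hb, hab⟩ := Finset.one_lt_card_iff.1 hcon
    rw [Finset.mem_bipartiteAbove, Finset.mem_filter] at ha hb
    have hxy : G.Adj p.1 p.2 := (Finset.mem_filter.1 hp).2
    have ca : Cyc G a := (Finset.mem_filter.1 ha.1.1).2.1
    have cb : Cyc G b := (Finset.mem_filter.1 hb.1.1).2.1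
    obtain ⟨z, hz, hzb⟩ := Set.not_subset.1 (fun h => hab (ca.eq_of_subset cb h))
    obtain ⟨w, hw, hwa⟩ := Set.not_subset.1 (fun h => hab (cb.eq_of_subset ca h).symm)
    have z1 : p.1 ≠ z := fun h => hzb (h ▸ hb.2.1)
    have z2 : p.2 ≠ z := fun h => hzb (h ▸ hb.2.2)
    have w1 : p.1 ≠ w := fun h => hwa (h ▸ ha.2.1)
    have w2 : p.2 ≠ w := fun h => hwa (h ▸ ha.2.2)
    exact hk ⟨p.1, p.2, z, w, hxy.ne, z1, w1, z2, w2, fun h => hzb (h ▸ hw), hxy,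
      ca.tri ha.1.2 ha.2.1 hz z1, cb.tri hb.1.2 hb.2.1 hw w1,
      ca.tri ha.1.2 ha.2.2 hz z2, cb.tri hb.1.2 hb.2.2 hw w2⟩
  have s1 : ∑ S ∈ F, (P.bipartiteBelow r S).card ≤ P.card * 2 := by
    rw [← Finset.sum_card_bipartiteAbove_eq_sum_card_bipartiteBelow, ← smul_eq_mul]
    exact Finset.sum_le_card_nsmul _ _ _ hle2
  have s2 : ∑ S ∈ T, (P.bipartiteBelow r S).card ≤ P.card * 1 := by
    rw [← Finset.sum_card_bipartiteAbove_eq_sum_card_bipartiteBelow, ← smul_eq_mul]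
    exact Finset.sum_le_card_nsmul _ _ _ hle1
  have s3 : T.card * 6 ≤ ∑ S ∈ T, (P.bipartiteBelow r S).card := by
    rw [← smul_eq_mul]
    apply Finset.card_nsmul_le_sum
    intro S hS
    have := hcnt S (hTF hS)
    rw [(Finset.mem_filter.1 hS).2] at this
    exact this
  have s4 : (F \ T).card * 8 ≤ ∑ S ∈ F \ T, (P.bipartiteBelow r S).card := by
    rw [← smul_eq_mul]
    apply Finset.card_nsmul_le_sum
    intro S hS
    rw [Finset.mem_sdiff] at hS
    have h1 := hcnt S hS.1
    have h2 := (Finset.mem_filter.1 hS.1).2.1.three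
    have h3 : S.ncard ≠ 3 := fun h => hS.2 (Finset.mem_filter.2 ⟨hS.1, h⟩)
    omega
  have s5 := Finset.sum_sdiff (f := fun S => (P.bipartiteBelow r S).card) hTF
  have s6 := Finset.card_sdiff_add_card_eq_card hTF
  have hpos : 0 < Fintype.card W := Fintype.card_pos
  rw [hF, hEe, Nat.card_eq_fintype_card] at hE
  omega

theorem adj_ncard {V : Type*} [Fintype V] {G : SimpleGraph V} (h5 : IsKConnected 5 G) (u : V) :
    5 ≤ {w | G.Adj u w}.ncard := by
  by_contra hcon
  push Not at hcon
  have hc := conn_of_induce (h5.2 _ (Set.toFinite {w | G.Adj u w}) hcon)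
  obtain ⟨a, rfl, b, hb, -, hab⟩ := hc.2 {u} (by
      rintro w rfl
      exact fun h => G.loopless.irrefl _ h)
    ⟨u, rfl⟩ (by
      intro he
      have h1 : (Set.univ : Set V) = {u} ∪ {w | G.Adj u w} := by
        rw [he, Set.compl_union_self]
      have h2 := Set.ncard_union_le {u} {w | G.Adj u w}
      rw [← h1, Set.ncard_singleton] at h2
      have := h5.1
      omega)
  exact hb hab

theorem minor_induce_ncard {V : Type*} [Fintype V] {v : V} (S : Set ({v}ᶜ : Set V)) :
    (insert v (Subtype.val '' S)).ncard = S.ncard + 1 := by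
  rw [Set.ncard_insert_of_notMem, Set.ncard_image_of_injective _ Subtype.val_injective]
  rintro ⟨w, -, h⟩
  exact w.2 h

theorem conn_sub {V : Type*} [Fintype V] {G : SimpleGraph V} (h5 : IsKConnected 5 G) (v : V)
    (S : Set ({v}ᶜ : Set V)) (hS : S.ncard < 4) : Conn (G.induce ({v}ᶜ : Set V)) Sᶜ := by
  have hc := conn_of_induce (h5.2 (insert v (Subtype.val '' S)) (Set.toFinite _)
    (by rw [minor_induce_ncard]; omega))
  have hm : ∀ w : V, w ∈ (insert v (Subtype.val '' S))ᶜ ↔ ∃ h : w ∈ ({v}ᶜ : Set V),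
      (⟨w, h⟩ : ({v}ᶜ : Set V)) ∈ Sᶜ := by
    intro w
    constructor
    · intro h
      have hw : w ∈ ({v}ᶜ : Set V) := fun h' => h (Or.inl h')
      exact ⟨hw, fun h' => h (Or.inr ⟨_, h', rfl⟩)⟩
    · rintro ⟨h, h'⟩ (h1 | ⟨x, hx, rfl⟩)
      · exact h h1
      · exact h' hx
  constructor
  · obtain ⟨w, hw⟩ := hc.1
    obtain ⟨h, h'⟩ := (hm w).1 hw
    exact ⟨_, h'⟩
  · rintro T hT ⟨t, ht⟩ hne
    obtain ⟨a, ⟨a', ha', rfl⟩, b, hb, hbT, hab⟩ := hc.2 (Subtype.val '' T) (by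
      rintro _ ⟨x, hx, rfl⟩
      exact (hm _).2 ⟨x.2, hT hx⟩) ⟨_, t, ht, rfl⟩ (by
      intro he
      apply hne
      apply hT.antisymm
      intro x hx
      have : x.1 ∈ Subtype.val '' T := by rw [he]; exact (hm _).2 ⟨x.2, hx⟩
      obtain ⟨y, hy, hyx⟩ := this
      rwa [← Subtype.ext hyx])
    obtain ⟨h, h'⟩ := (hm b).1 hb
    exact ⟨a', ha', ⟨b, h⟩, h', fun h2 => hbT ⟨_, h2, rfl⟩, hab⟩

end Apex

/-- If `G` is 5-connected, nonplanar, with apex vertex `v`, and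
`K₄⁻ ⊄ G`, then the planar graph `G - v` has minimum degree exactly 4. -/
theorem stmt2 {V : Type*} [Fintype V] (G : SimpleGraph V)
    (h5 : IsKConnected 5 G) (hnp : ¬ IsPlanar G) (v : V)
    (hv : IsPlanar (G.induce ({v}ᶜ : Set V))) (hk4 : ¬ containsK4minus G) :
    (∀ u : V, u ≠ v → 4 ≤ {w | w ≠ v ∧ G.Adj u w}.ncard) ∧
    (∃ u : V, u ≠ v ∧ {w | w ≠ v ∧ G.Adj u w}.ncard = 4) := by
  have hge : ∀ u : V, u ≠ v → 4 ≤ {w | w ≠ v ∧ G.Adj u w}.ncard := by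
    intro u _
    have h1 := Apex.adj_ncard h5 u
    have h2 : {w | G.Adj u w} ⊆ insert v {w | w ≠ v ∧ G.Adj u w} := by
      intro w hw
      by_cases h : w = v
      · exact Or.inl h
      · exact Or.inr ⟨h, hw⟩
    have h3 := Set.ncard_le_ncard h2
    have h4 := Set.ncard_insert_le v {w | w ≠ v ∧ G.Adj u w}
    omega
  refine ⟨hge, ?_⟩
  by_contra hcon
  have := Fintype.ofFinite ({v}ᶜ : Set V)
  have hconn := Apex.conn_sub h5 v
  have hne : Nonempty ({v}ᶜ : Set V) := by
    obtain ⟨x, -⟩ := (hconn ∅ (by simp)).1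
    exact ⟨x⟩
  refine Apex.key (G := G.induce ({v}ᶜ : Set V)) hconn ?_ hv.2 hv.1 ?_
  · intro x
    have hx : (x : V) ≠ v := x.2
    have h1 := hge x hx
    have h2 : {w | w ≠ v ∧ G.Adj x w}.ncard ≠ 4 := fun h => hcon ⟨x, hx, h⟩
    have h3 : {w | w ≠ v ∧ G.Adj x w} =
        Subtype.val '' {y | (G.induce ({v}ᶜ : Set V)).Adj x y} := by
      ext w
      constructor
      · rintro ⟨hw, h⟩
        exact ⟨⟨w, hw⟩, h, rfl⟩
      · rintro ⟨y, hy, rfl⟩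
        exact ⟨y.2, hy⟩
    rw [h3, Set.ncard_image_of_injective _ Subtype.val_injective] at h1 h2
    exact Nat.lt_of_le_of_ne h1 (Ne.symm h2)
  · rintro ⟨a, b, c, d, h1, h2, h3, h4, h5, h6, h7⟩
    refine hk4 ⟨a, b, c, d, ?_, ?_, ?_, ?_, ?_, ?_, h7⟩ <;>
      rw [Ne, Subtype.val_inj] <;> assumption
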